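/- arXiv:2211.15818 — 2 statements merged into one kernel-verified Lean document; each statement's English description precedes it below -/
import Mathlib

section
/- Let G be a finite pseudo-solvable group and let p be a prime with p ∉ {2,3,5} such that p, 3, and 5 all divide |G| and G has no element of order 3p, no element of order 5p, and no element of order 15 (so {p,3,5} forms a triangle in the complement of the prime graph of G). Let r be a prime dividing |G| with r ∉ {3,5}. If G has no element of order 3r, then G has no element of order 5r. -/
/-- A finite group is *pseudo-solvable* if it has a subnormal series whose factors are
all cyclic or isomorphic to the alternating group `A₅`. -/
def IsPseudoSolvable (G : Type*) [Group G] : Prop :=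
  ∃ (n : ℕ) (H : Fin (n + 1) → Subgroup G),
    H 0 = ⊥ ∧ H (Fin.last n) = ⊤ ∧
    ∀ i : Fin n, H i.castSucc ≤ H i.succ ∧
      ∃ hN : ((H i.castSucc).subgroupOf (H i.succ)).Normal,
        haveI := hN
        IsCyclic (H i.succ ⧸ (H i.castSucc).subgroupOf (H i.succ)) ∨
        Nonempty ((H i.succ ⧸ (H i.castSucc).subgroupOf (H i.succ)) ≃* alternatingGroup (Fin 5))

/-!
Suppose `{a, b, c}` is a triangle in the complement of the prime graph. On a normal abelian
`a`-subgroup the elements of order `b` and `c` act without fixed points, and a Frobenius group of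
order divisible by `b * c` cannot act like that: adding up the vanishing norms of the conjugates of
its complement shows that the abelian group is trivial. In a solvable group every edge of the
triangle produces such a Frobenius group, so a solvable group has no triangle.

A pseudo-solvable group with two composition factors `A₅` has an element of order `15`, because
every automorphism of `A₅` is induced by `S₅`. Hence here `G` is an extension of `A₅` or `S₅` by a
solvable group `K`; as `p` divides `|K|`, the argument above shows that `3` and `5` do not.

Suppose `x` of order `5` and `y` of order `r` commute, and let `V ≤ K` be a nontrivial abelian
normal `l`-subgroup, `l` prime. If `y ∉ V`, then pass to `G ⧸ V`. If `y ∈ V`, then `l = r` and the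
elements of order `3` act on `V` without fixed points. Let `a` and `b` have order `3`, with `a * b`
over a `5`-cycle. From `1 + a + a⁻¹ = 0` and the same relation for `b` it follows that `a`
preserves the fixed points of a power `z` of `a * b` of order `5`, so `⁅z⁻¹, a⁻¹⁆`, whose order is
divisible by `3`, fixes them all, and there are none except `1`. By Sylow's theorem this holds for
every element of order `5`, in particular for `x`, contradicting that `x` fixes `y`.
-/

/-! ### The prime graph -/

/-- The complement of the prime graph of `G`, with all primes admitted as vertices, so that a
prime not dividing `|G|` is adjacent to every other prime. With this convention the graph can only
gain edges when `G` is replaced by a subgroup or a quotient. -/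
def primeGraphCompl (G : Type*) [Group G] : SimpleGraph ℕ where
  Adj p q := p.Prime ∧ q.Prime ∧ p ≠ q ∧ ¬ ∃ g : G, orderOf g = p * q
  symm := ⟨fun p q ⟨hp, hq, hpq, h⟩ ↦ ⟨hq, hp, hpq.symm, by rwa [mul_comm]⟩⟩
  loopless := ⟨fun _ h ↦ h.2.2.1 rfl⟩

section PrimeGraph

variable {G : Type*} [Group G] {p q : ℕ}

theorem exists_orderOf_eq_of_dvd_orderOf [Finite G] {g : G} {n : ℕ} (h : n ∣ orderOf g) :
    ∃ x : G, orderOf x = n :=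
  ⟨g ^ (orderOf g / n), orderOf_pow_orderOf_div (orderOf_pos g).ne' h⟩

theorem not_dvd_orderOf_of_primeGraphCompl_adj [Finite G] (h : (primeGraphCompl G).Adj p q)
    (g : G) : ¬ p * q ∣ orderOf g :=
  fun hg ↦ h.2.2.2 (exists_orderOf_eq_of_dvd_orderOf hg)

theorem not_commute_of_primeGraphCompl_adj [Finite G] (h : (primeGraphCompl G).Adj p q) {x y : G}
    (hx : p ∣ orderOf x) (hy : q ∣ orderOf y) : ¬ Commute x y := by
  intro hxy
  obtain ⟨hp, hq, hpq, hno⟩ := h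
  have hx' := orderOf_pow_orderOf_div (orderOf_pos x).ne' hx
  have hy' := orderOf_pow_orderOf_div (orderOf_pos y).ne' hy
  refine hno ⟨x ^ (orderOf x / p) * y ^ (orderOf y / q), ?_⟩
  rw [(hxy.pow_pow _ _).orderOf_mul_eq_mul_orderOf_of_coprime, hx', hy']
  rw [hx', hy']
  exact (Nat.coprime_primes hp hq).2 hpq

theorem primeGraphCompl_le_quotient [Finite G] (V : Subgroup G) [V.Normal] :
    primeGraphCompl G ≤ primeGraphCompl (G ⧸ V) := by
  rintro p q ⟨hp, hq, hpq, hno⟩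
  refine ⟨hp, hq, hpq, ?_⟩
  rintro ⟨x, hx⟩
  obtain ⟨g, rfl⟩ := QuotientGroup.mk_surjective x
  exact hno (exists_orderOf_eq_of_dvd_orderOf (hx ▸ orderOf_map_dvd (QuotientGroup.mk' V) g))

theorem primeGraphCompl_le_subgroup (H : Subgroup G) :
    primeGraphCompl G ≤ primeGraphCompl H := by
  rintro p q ⟨hp, hq, hpq, hno⟩
  exact ⟨hp, hq, hpq, fun ⟨x, hx⟩ ↦ hno ⟨x, by rw [Subgroup.orderOf_coe, hx]⟩⟩

end PrimeGraph

/-! ### Fixed-point-free actions on abelian groups -/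

section FixedPointFree

/-- `g` fixes no nontrivial element of `A`. -/
def IsFixedPointFree {G : Type*} (A : Type*) [One A] [SMul G A] (g : G) : Prop :=
  MonoidHom.FixedPointFree fun u : A ↦ g • u

variable {G : Type*} [Group G]

variable {A : Type*} [CommGroup A] [MulDistribMulAction G A] {t x : G} {n : ℕ}

theorem IsFixedPointFree.conj (hx : IsFixedPointFree A x) (g : G) :
    IsFixedPointFree A (g * x * g⁻¹) := by
  intro u hu
  have h : x • g⁻¹ • u = g⁻¹ • u := by
    rw [eq_inv_smul_iff, smul_smul, smul_smul]
    exact hu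
  exact (inv_smul_eq_iff.1 (hx _ h)).trans (smul_one g)

theorem IsFixedPointFree.of_zpow {j : ℤ} (hx : IsFixedPointFree A (x ^ j)) :
    IsFixedPointFree A x :=
  fun u hu ↦ hx u (Subgroup.zpow_mem (MulAction.stabilizer G u) hu j)

theorem IsFixedPointFree.prod_range_pow_smul_eq_one (ht : IsFixedPointFree A t) (hn : t ^ n = 1)
    (u : A) : ∏ i ∈ Finset.range n, t ^ i • u = 1 := by
  apply ht
  have h := (Finset.prod_range_succ' (fun i ↦ t ^ i • u) n).symm.trans (Finset.prod_range_succ _ n)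
  rw [hn, pow_zero, mul_left_inj] at h
  simpa only [Finset.smul_prod', smul_smul, ← pow_succ'] using h

theorem IsFixedPointFree.prod_subgroup_smul_eq_one {E : Subgroup G} [Fintype E] {e : G}
    (hfe : IsFixedPointFree A e) (he : e ∈ E) (u : A) : ∏ x : E, (x : G) • u = 1 := by
  apply hfe
  simp only [Finset.smul_prod']
  exact Fintype.prod_equiv (Equiv.mulLeft (⟨e, he⟩ : E)) _ _ fun x ↦ (mul_smul ..).symm

theorem prod_conj_smul_eq_one {E : Subgroup G} [Fintype E] {s e : G}
    (hs : s ∈ Subgroup.normalizer (E : Set G)) (hsE : ∀ e ∈ E, Commute s e → e = 1) (he : e ∈ E)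
    (hfe : IsFixedPointFree A e) (u : A) : ∏ x : E, ((x : G) * s * (x : G)⁻¹) • u = 1 := by
  have hfpf : MonoidHom.FixedPointFree (E.normalizerMonoidHom ⟨s, hs⟩) := fun x hx ↦
    Subtype.ext <| hsE x x.2 <| mul_inv_eq_iff_eq_mul.1 <| congrArg Subtype.val hx
  rw [← hfe.prod_subgroup_smul_eq_one he (s • u)]
  refine Fintype.prod_bijective _ ⟨hfpf.commutatorMap_injective, hfpf.commutatorMap_surjective⟩
    _ _ fun x ↦ ?_
  rw [smul_smul]
  congr 1
  simp [div_eq_mul_inv, mul_assoc]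

/- Multiply the relations `∏ i, (x * t ^ i * x⁻¹) • u = 1` over `x : E`: the factors with `i ≠ 0`
cancel, and those with `i = 0` give `u ^ |E|`. -/
theorem pow_card_eq_one_of_normalizer {E : Subgroup G} [Finite E] {e : G}
    (ht : t ∈ Subgroup.normalizer (E : Set G)) (hn : t ^ n = 1) (hn0 : n ≠ 0)
    (htE : ∀ i, i ≠ 0 → i < n → ∀ e ∈ E, Commute (t ^ i) e → e = 1) (he : e ∈ E)
    (hfe : IsFixedPointFree A e) (hft : IsFixedPointFree A t) (u : A) : u ^ Nat.card E = 1 := by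
  have := Fintype.ofFinite E
  have h : ∏ x : E, ∏ i ∈ Finset.range n, ((x : G) * t ^ i * (x : G)⁻¹) • u = 1 := by
    refine Finset.prod_eq_one fun x _ ↦ ?_
    simpa only [conj_pow] using (hft.conj (x : G)).prod_range_pow_smul_eq_one
      (by rw [conj_pow, hn, mul_one, mul_inv_cancel]) u
  rw [Finset.prod_comm, Finset.prod_eq_single_of_mem 0 (Finset.mem_range.2 hn0.bot_lt)] at h
  · simpa using h
  · intro i hi hi0
    exact prod_conj_smul_eq_one (pow_mem ht i) (htE i hi0 (Finset.mem_range.1 hi)) he hfe u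

end FixedPointFree

section ConjAction

open scoped IsMulCommutative

variable {G : Type*} [Group G] {V : Subgroup G} [V.Normal] {a b c : ℕ}

/-- The conjugation action of `G` on a normal subgroup. -/
abbrev conjMulDistribMulAction (V : Subgroup G) [V.Normal] : MulDistribMulAction G V :=
  MulDistribMulAction.compHom V (MulAut.conjNormal (H := V))

attribute [local instance] conjMulDistribMulAction

theorem conj_smul_eq_self_iff {g : G} {v : V} : g • v = v ↔ Commute g v :=
  Subtype.ext_iff.trans mul_inv_eq_iff_eq_mul

theorem dvd_orderOf_of_mem_of_isPGroup {H : Subgroup G} [Fact a.Prime] (hH : IsPGroup a H) {h : G}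
    (hh : h ∈ H) (h1 : h ≠ 1) : a ∣ orderOf h :=
  Subgroup.orderOf_mk h hh ▸ hH.dvd_orderOf (g := ⟨h, hh⟩) (by simpa using h1)

theorem isFixedPointFree_of_adj [Finite G] (hV : IsPGroup a V)
    (hab : (primeGraphCompl G).Adj a b) {g : G} (hg : b ∣ orderOf g) : IsFixedPointFree V g := by
  have := Fact.mk hab.1
  intro v hv
  by_contra h1
  have hav : a ∣ orderOf (v : G) := Subgroup.orderOf_coe v ▸ hV.dvd_orderOf h1
  exact not_commute_of_primeGraphCompl_adj hab hav hg (conj_smul_eq_self_iff.1 hv).symm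

/-- `G` has a nontrivial `p`-subgroup normalized by an element of order `q`. When `p` and `q` are
adjacent in `primeGraphCompl G` the two generate a Frobenius group. -/
def HasNormalizedPGroup (G : Type*) [Group G] (p q : ℕ) : Prop :=
  ∃ E : Subgroup G, IsPGroup p E ∧ E ≠ ⊥ ∧ ∃ t ∈ Subgroup.normalizer (E : Set G), orderOf t = q

theorem not_hasNormalizedPGroup_of_adj [Finite G] [IsMulCommutative V] (hV : IsPGroup a V)
    (hV1 : V ≠ ⊥) (hab : (primeGraphCompl G).Adj a b) (hac : (primeGraphCompl G).Adj a c)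
    (hbc : (primeGraphCompl G).Adj b c) : ¬ HasNormalizedPGroup G b c := by
  rintro ⟨E, hE, hE1, t, htE, rfl⟩
  have := Fact.mk hab.1
  have := Fact.mk hab.2.1
  obtain ⟨v, hv, hv1⟩ := V.bot_or_exists_ne_one.resolve_left hV1
  obtain ⟨e, he, he1⟩ := E.bot_or_exists_ne_one.resolve_left hE1
  have hpow : (⟨v, hv⟩ : V) ^ Nat.card E = 1 := by
    refine pow_card_eq_one_of_normalizer htE (pow_orderOf_eq_one t) (orderOf_pos t).ne'
      (fun i hi0 hi e he hcomm ↦ ?_) he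
      (isFixedPointFree_of_adj hV hab (dvd_orderOf_of_mem_of_isPGroup hE he he1))
      (isFixedPointFree_of_adj hV hac dvd_rfl) _
    by_contra h1
    have hti : orderOf (t ^ i) = orderOf t := by
      rw [orderOf_pow, Nat.Coprime.gcd_eq_one, Nat.div_one]
      exact Nat.coprime_of_lt_prime hi0 hi hac.2.1
    exact not_commute_of_primeGraphCompl_adj hbc (dvd_orderOf_of_mem_of_isPGroup hE he h1)
      hti.symm.dvd hcomm.symm
  have hcop : (Nat.card V).Coprime (Nat.card E) :=
    IsPGroup.coprime_card_of_ne a b hab.ne V E hV hE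
  exact hv1 <| congrArg Subtype.val <| orderOf_eq_one_iff.1 <| Nat.eq_one_of_dvd_coprimes hcop
    (orderOf_dvd_natCard _) (orderOf_dvd_of_pow_eq_one hpow)

end ConjAction

/-! ### Triangles and solvable normal subgroups -/

section NormalizedPGroup

open scoped IsMulCommutative

variable {G : Type*} [Group G] {a b c p q : ℕ}

theorem hasNormalizedPGroup_of_dvd_card_of_dvd_index [Finite G] (N : Subgroup G) [N.Normal]
    [Fact p.Prime] [Fact q.Prime] (hp : p ∣ Nat.card N) (hq : q ∣ N.index) :
    HasNormalizedPGroup G p q := by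
  obtain ⟨P⟩ : Nonempty (Sylow p N) := inferInstance
  let M := Subgroup.normalizer ((P : Subgroup N).map N.subtype : Set G)
  have hqM : q ∣ Nat.card M := by
    have h := Subgroup.relIndex_sup_right M N
    rw [P.normalizer_sup_eq_top, Subgroup.relIndex_top_right] at h
    exact (h ▸ hq).trans (Subgroup.relIndex_dvd_card _ _)
  obtain ⟨t, ht⟩ := exists_prime_orderOf_dvd_card' q hqM
  refine ⟨_, P.2.map N.subtype, ?_, t, t.2, (Subgroup.orderOf_coe t).trans ht⟩
  rw [Ne, Subgroup.map_eq_bot_iff_of_injective _ N.subtype_injective]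
  exact P.ne_bot_of_dvd_card hp

theorem orderOf_mk_of_coprime_card {V : Subgroup G} [V.Normal] {g : G}
    (h : (Nat.card V).Coprime (orderOf g)) : orderOf (g : G ⧸ V) = orderOf g := by
  refine Nat.dvd_antisymm (orderOf_map_dvd (QuotientGroup.mk' V) g) (orderOf_dvd_of_pow_eq_one ?_)
  have hmem : g ^ orderOf (g : G ⧸ V) ∈ V := by
    rw [← QuotientGroup.eq_one_iff, QuotientGroup.mk_pow, pow_orderOf_eq_one]
  exact orderOf_eq_one_iff.1 <| Nat.eq_one_of_dvd_coprimes h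
    (Subgroup.orderOf_dvd_natCard V hmem) (orderOf_pow_dvd _)

theorem coprime_card_of_isPGroup [Fact p.Prime] {V : Subgroup G} [Finite V] (hV : IsPGroup p V)
    (hq : q.Prime) (hpq : p ≠ q) : (Nat.card V).Coprime q := by
  obtain ⟨k, hk⟩ := IsPGroup.iff_card.1 hV
  rw [hk]
  exact Nat.Coprime.pow_left k ((Nat.coprime_primes Fact.out hq).2 hpq)

theorem HasNormalizedPGroup.quotient [Finite G] [Fact p.Prime] {V : Subgroup G} [V.Normal]
    (h : HasNormalizedPGroup G p q) (hp : (Nat.card V).Coprime p) (hq : (Nat.card V).Coprime q) :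
    HasNormalizedPGroup (G ⧸ V) p q := by
  obtain ⟨E, hE, hE1, t, htE, rfl⟩ := h
  refine ⟨E.map (QuotientGroup.mk' V), hE.map _, fun hbot ↦ hE1 ?_, t,
    Subgroup.le_normalizer_map _ (Subgroup.mem_map_of_mem _ htE), orderOf_mk_of_coprime_card hq⟩
  rw [Subgroup.map_eq_bot_iff, QuotientGroup.ker_mk'] at hbot
  obtain ⟨k, hk⟩ := IsPGroup.iff_card.1 hE
  have hcop : (Nat.card E).Coprime (Nat.card V) := by
    rw [hk]
    exact Nat.Coprime.pow_left k hp.symm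
  exact (Subgroup.disjoint_of_coprime_natCard hcop).eq_bot_of_le hbot

theorem dvd_card_commutator_of_adj [Finite G] (h : (primeGraphCompl G).Adj p q)
    (hp : p ∣ Nat.card G) (hq : q ∣ Nat.card G) :
    p ∣ Nat.card (commutator G) ∨ q ∣ Nat.card (commutator G) := by
  have := Fact.mk h.1
  have := Fact.mk h.2.1
  by_contra! hno
  obtain ⟨x, hx⟩ := exists_prime_orderOf_dvd_card' p hp
  obtain ⟨y, hy⟩ := exists_prime_orderOf_dvd_card' q hq
  have hxy : Commute (x : G ⧸ commutator G) (y : G ⧸ commutator G) :=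
    mul_comm (G := Abelianization G) _ _
  have hx' : orderOf (x : G ⧸ commutator G) = p :=
    hx ▸ orderOf_mk_of_coprime_card (hx ▸ (h.1.coprime_iff_not_dvd.2 hno.1).symm)
  have hy' : orderOf (y : G ⧸ commutator G) = q :=
    hy ▸ orderOf_mk_of_coprime_card (hy ▸ (h.2.1.coprime_iff_not_dvd.2 hno.2).symm)
  exact not_commute_of_primeGraphCompl_adj (primeGraphCompl_le_quotient _ h) hx'.symm.dvd
    hy'.symm.dvd hxy

theorem card_commutator_subgroup (X : Subgroup G) :
    Nat.card (⁅X, X⁆ : Subgroup G) = Nat.card (commutator X) := by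
  rw [← X.map_subtype_commutator, Subgroup.card_map_of_injective X.subtype_injective]

theorem hasNormalizedPGroup_or_of_adj [Finite G] [Group.IsSolvable G]
    (h : (primeGraphCompl G).Adj p q) (hp : p ∣ Nat.card G) (hq : q ∣ Nat.card G) :
    HasNormalizedPGroup G p q ∨ HasNormalizedPGroup G q p := by
  have := Fact.mk h.1
  have := Fact.mk h.2.1
  obtain ⟨X, ⟨hXn, hXd⟩, hXmin⟩ :=
    {X : Subgroup G | X.Normal ∧ (p ∣ Nat.card X ∨ q ∣ Nat.card X)}.toFinite.exists_minimal
      ⟨⊤, inferInstance, .inl (by rwa [Subgroup.card_top])⟩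
  have hX1 : X ≠ ⊥ := by
    rintro rfl
    rw [Subgroup.card_bot] at hXd
    exact hXd.elim h.1.not_dvd_one h.2.1.not_dvd_one
  have hlt := Group.IsSolvable.commutator_lt_of_ne_bot hX1
  have hnot : ¬ (p ∣ Nat.card X ∧ q ∣ Nat.card X) := fun ⟨hpX, hqX⟩ ↦
    hlt.not_ge <| hXmin ⟨inferInstance, card_commutator_subgroup X ▸
      dvd_card_commutator_of_adj (primeGraphCompl_le_subgroup X h) hpX hqX⟩ hlt.le
  rw [← X.card_mul_index] at hp hq
  rcases hXd with hpX | hqX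
  · exact .inl <| hasNormalizedPGroup_of_dvd_card_of_dvd_index X hpX <|
      (h.2.1.dvd_mul.1 hq).resolve_left fun hqX ↦ hnot ⟨hpX, hqX⟩
  · exact .inr <| hasNormalizedPGroup_of_dvd_card_of_dvd_index X hqX <|
      (h.1.dvd_mul.1 hp).resolve_left fun hpX ↦ hnot ⟨hpX, hqX⟩

theorem commutator_lt_of_isSolvable {D : Subgroup G} [Group.IsSolvable D] (hD : D ≠ ⊥) :
    ⁅D, D⁆ < D := by
  have := D.nontrivial_iff_ne_bot.2 hD
  have h := (Subgroup.map_lt_map_iff_of_injective D.subtype_injective).2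
    (Group.IsSolvable.commutator_lt_top_of_nontrivial D)
  rwa [Subgroup.map_subtype_commutator, ← MonoidHom.range_eq_map, Subgroup.range_subtype] at h

theorem exists_isPGroup_normal_le [Finite G] {N : Subgroup G} [N.Normal]
    [Group.IsSolvable N] (hN : N ≠ ⊥) : ∃ l, l.Prime ∧ ∃ V : Subgroup G,
      V.Normal ∧ V ≠ ⊥ ∧ V ≤ N ∧ IsPGroup l V ∧ IsMulCommutative V := by
  obtain ⟨D, ⟨hDn, hD1, hDN⟩, hDmin⟩ :=
    {D : Subgroup G | D.Normal ∧ D ≠ ⊥ ∧ D ≤ N}.toFinite.exists_minimal ⟨N, ‹_›, hN, le_rfl⟩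
  have : Group.IsSolvable D :=
    Group.isSolvable_of_isSolvable_injective (Subgroup.inclusion_injective hDN)
  have hlt := commutator_lt_of_isSolvable hD1
  have hDcomm : IsMulCommutative D := Subgroup.commutator_self_eq_bot_iff.1 <| by
    by_contra h1
    exact hlt.not_ge (hDmin ⟨inferInstance, h1, hlt.le.trans hDN⟩ hlt.le)
  obtain ⟨l, hl, hlD⟩ := Nat.exists_prime_and_dvd
    (fun h ↦ hD1 (D.eq_bot_of_card_eq h) : Nat.card D ≠ 1)
  have := Fact.mk hl
  obtain ⟨P⟩ : Nonempty (Sylow l D) := inferInstance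
  have := P.characteristic_of_normal inferInstance
  refine ⟨l, hl, (P : Subgroup D).map D.subtype, inferInstance, ?_,
    (Subgroup.map_subtype_le _).trans hDN, P.2.map _, inferInstance⟩
  rw [Ne, Subgroup.map_eq_bot_iff_of_injective _ D.subtype_injective]
  exact P.ne_bot_of_dvd_card hlD

theorem card_quotient_lt_card [Finite G] {V : Subgroup G} (hV : V ≠ ⊥) :
    Nat.card (G ⧸ V) < Nat.card G := by
  rw [Subgroup.card_eq_card_quotient_mul_card_subgroup V]
  exact lt_mul_of_one_lt_right Nat.card_pos ((Subgroup.one_lt_card_iff_ne_bot V).2 hV)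

theorem not_hasNormalizedPGroup_or_of_adj [Finite G] {V : Subgroup G} [V.Normal]
    [IsMulCommutative V] (hV : IsPGroup a V) (hV1 : V ≠ ⊥) (hab : (primeGraphCompl G).Adj a b)
    (hac : (primeGraphCompl G).Adj a c) (hbc : (primeGraphCompl G).Adj b c) :
    ¬ (HasNormalizedPGroup G b c ∨ HasNormalizedPGroup G c b) :=
  not_or.2 ⟨not_hasNormalizedPGroup_of_adj hV hV1 hab hac hbc,
    not_hasNormalizedPGroup_of_adj hV hV1 hac hab hbc.symm⟩

theorem not_dvd_card_of_hasNormalizedPGroup {G : Type*} [Group G] [Finite G]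
    (hab : (primeGraphCompl G).Adj a b) (hac : (primeGraphCompl G).Adj a c)
    (hbc : (primeGraphCompl G).Adj b c)
    (nab : HasNormalizedPGroup G a b ∨ HasNormalizedPGroup G b a)
    (nac : HasNormalizedPGroup G a c ∨ HasNormalizedPGroup G c a)
    (nbc : HasNormalizedPGroup G b c ∨ HasNormalizedPGroup G c b)
    (N : Subgroup G) [N.Normal] [Group.IsSolvable N] : ¬ a ∣ Nat.card N := by
  intro ha
  have := Fact.mk hab.1
  have := Fact.mk hab.2.1
  have := Fact.mk hac.2.1
  have hN : N ≠ ⊥ := by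
    rintro rfl
    exact hab.1.not_dvd_one (by rwa [Subgroup.card_bot] at ha)
  obtain ⟨l, hl, V, hVn, hV1, hVN, hV, hVc⟩ := exists_isPGroup_normal_le hN
  have := Fact.mk hl
  have hla : l ≠ a := by
    rintro rfl
    exact not_hasNormalizedPGroup_or_of_adj hV hV1 hab hac hbc nbc
  have hlb : l ≠ b := by
    rintro rfl
    exact not_hasNormalizedPGroup_or_of_adj hV hV1 hab.symm hbc hac nac
  have hlc : l ≠ c := by
    rintro rfl
    exact not_hasNormalizedPGroup_or_of_adj hV hV1 hac.symm hbc.symm hab nab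
  have ca := coprime_card_of_isPGroup hV hab.1 hla
  have cb := coprime_card_of_isPGroup hV hab.2.1 hlb
  have cc := coprime_card_of_isPGroup hV hac.2.1 hlc
  have hle := primeGraphCompl_le_quotient V
  have : Nat.card (G ⧸ V) < Nat.card G := card_quotient_lt_card hV1
  have : Group.IsSolvable (N.map (QuotientGroup.mk' V)) :=
    Group.isSolvable_of_surjective ((QuotientGroup.mk' V).subgroupMap_surjective N)
  refine not_dvd_card_of_hasNormalizedPGroup (G := G ⧸ V) (hle hab) (hle hac) (hle hbc)
    (nab.imp (·.quotient ca cb) (·.quotient cb ca)) (nac.imp (·.quotient ca cc) (·.quotient cc ca))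
    (nbc.imp (·.quotient cb cc) (·.quotient cc cb)) (N.map (QuotientGroup.mk' V)) ?_
  have hcard : Nat.card V * Nat.card (N.map (QuotientGroup.mk' V)) = Nat.card N := by
    rw [← Subgroup.relIndex_ker, QuotientGroup.ker_mk', ← Subgroup.relIndex_bot_left,
      Subgroup.relIndex_mul_relIndex _ _ _ bot_le hVN, Subgroup.relIndex_bot_left]
  exact ca.symm.dvd_of_dvd_mul_left (hcard.symm ▸ ha)
termination_by Nat.card G

theorem not_triangle_of_isSolvable [Finite G] [Group.IsSolvable G]
    (hab : (primeGraphCompl G).Adj a b) (hac : (primeGraphCompl G).Adj a c)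
    (hbc : (primeGraphCompl G).Adj b c) (ha : a ∣ Nat.card G) (hb : b ∣ Nat.card G) :
    ¬ c ∣ Nat.card G := by
  intro hc
  refine not_dvd_card_of_hasNormalizedPGroup hab hac hbc (hasNormalizedPGroup_or_of_adj hab ha hb)
    (hasNormalizedPGroup_or_of_adj hac ha hc) (hasNormalizedPGroup_or_of_adj hbc hb hc) ⊤ ?_
  rwa [Subgroup.card_top]

theorem not_dvd_card_of_dvd_index [Finite G] (hab : (primeGraphCompl G).Adj a b)
    (hac : (primeGraphCompl G).Adj a c) (hbc : (primeGraphCompl G).Adj b c) (N : Subgroup G)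
    [N.Normal] [Group.IsSolvable N] (ha : a ∣ N.index) (hb : b ∣ N.index) (hc : c ∣ Nat.card N) :
    ¬ a ∣ Nat.card N := by
  intro haN
  have := Fact.mk hab.1
  have := Fact.mk hab.2.1
  have := Fact.mk hac.2.1
  exact not_dvd_card_of_hasNormalizedPGroup hab hac hbc
    (.inl (hasNormalizedPGroup_of_dvd_card_of_dvd_index N haN hb))
    (.inr (hasNormalizedPGroup_of_dvd_card_of_dvd_index N hc ha))
    (.inr (hasNormalizedPGroup_of_dvd_card_of_dvd_index N hc hb)) N haN

end NormalizedPGroup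

/-! ### Extensions of `A₅` and `S₅` -/

section LiftElements

variable {G P : Type*} [Group G] [Group P]

theorem exists_pow_pow_eq_one_and_map_eq (φ : G →* P) {q : ℕ} (hq : (Nat.card φ.ker).Coprime q)
    {g : G} (hg : φ g ^ q = 1) : ∃ k : ℕ, (g ^ k) ^ q = 1 ∧ φ (g ^ k) = φ g := by
  obtain ⟨k, hk0, hk1⟩ := Nat.chineseRemainder hq 0 1
  obtain ⟨m, rfl⟩ := Nat.modEq_zero_iff_dvd.1 hk0
  refine ⟨Nat.card φ.ker * m, ?_, ?_⟩
  · have hmem : g ^ q ∈ φ.ker := by rwa [MonoidHom.mem_ker, map_pow]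
    rw [pow_right_comm, pow_mul,
      orderOf_dvd_iff_pow_eq_one.1 (Subgroup.orderOf_dvd_natCard _ hmem), one_pow]
  · rw [map_pow]
    conv_rhs => rw [← pow_one (φ g)]
    exact pow_eq_pow_iff_modEq.2 (hk1.of_dvd (orderOf_dvd_of_pow_eq_one hg))

theorem exists_eq_conj_zpow [Finite G] {p : ℕ} [Fact p.Prime] (hp : ¬ p ^ 2 ∣ Nat.card G)
    {x y : G} (hx : orderOf x = p) (hy : orderOf y = p) :
    ∃ g : G, ∃ j : ℤ, y = g * x ^ j * g⁻¹ := by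
  have hfac : p ^ (Nat.card G).factorization p = p := by
    have hpp : p.Prime := Fact.out
    have h1 := (hpp.dvd_iff_one_le_factorization Nat.card_pos.ne').1 (hx ▸ orderOf_dvd_natCard x)
    rw [hpp.pow_dvd_iff_le_factorization Nat.card_pos.ne'] at hp
    rw [show (Nat.card G).factorization p = 1 by lia, pow_one]
  let P : Sylow p G := Sylow.ofCard (Subgroup.zpowers x) (by rw [Nat.card_zpowers, hx, hfac])
  let Q : Sylow p G := Sylow.ofCard (Subgroup.zpowers y) (by rw [Nat.card_zpowers, hy, hfac])
  obtain ⟨g, hg⟩ := MulAction.exists_smul_eq G P Q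
  have hyP : y ∈ g • P := hg ▸ Subgroup.mem_zpowers y
  obtain ⟨_, ⟨j, rfl⟩, hj⟩ := hyP
  exact ⟨g, j, hj.symm⟩

end LiftElements

section A5Cover

/-- `φ` exhibits `G` as an extension of `A₅` or `S₅` by a solvable group. -/
structure IsA5Cover {G : Type*} [Group G] (φ : G →* Equiv.Perm (Fin 5)) : Prop where
  alternatingGroup_le_range : alternatingGroup (Fin 5) ≤ φ.range
  isSolvable_ker : Group.IsSolvable φ.ker

variable {G : Type*} [Group G] {φ : G →* Equiv.Perm (Fin 5)}

theorem IsA5Cover.dvd_index_ker (h : IsA5Cover φ) : 60 ∣ φ.ker.index := by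
  have h60 := Subgroup.card_dvd_of_le h.alternatingGroup_le_range
  rwa [nat_card_alternatingGroup, Nat.card_fin, ← Subgroup.index_ker] at h60

theorem index_ker_dvd (φ : G →* Equiv.Perm (Fin 5)) : φ.ker.index ∣ 120 := by
  have h := Subgroup.card_subgroup_dvd_card φ.range
  rwa [Nat.card_perm, Nat.card_fin, ← Subgroup.index_ker] at h

theorem IsA5Cover.quotient (h : IsA5Cover φ) {V : Subgroup G} [V.Normal] (hV : V ≤ φ.ker) :
    IsA5Cover (QuotientGroup.lift V φ hV) where
  alternatingGroup_le_range σ hσ :=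
    let ⟨g, hg⟩ := h.alternatingGroup_le_range hσ
    ⟨g, hg⟩
  isSolvable_ker := by
    have := h.isSolvable_ker
    rw [QuotientGroup.ker_lift]
    exact Group.isSolvable_of_surjective ((QuotientGroup.mk' V).subgroupMap_surjective φ.ker)

theorem card_ker_lift_dvd {V : Subgroup G} [V.Normal] (hV : V ≤ φ.ker) :
    Nat.card (QuotientGroup.lift V φ hV).ker ∣ Nat.card φ.ker := by
  rw [QuotientGroup.ker_lift]
  exact Subgroup.card_map_dvd _ _

theorem IsA5Cover.coprime_card_ker [Finite G] (h : IsA5Cover φ) {p : ℕ}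
    (h35 : (primeGraphCompl G).Adj 3 5) (h3p : (primeGraphCompl G).Adj 3 p)
    (h5p : (primeGraphCompl G).Adj 5 p) (hp2 : p ≠ 2) (hp : p ∣ Nat.card G) :
    (Nat.card φ.ker).Coprime 3 ∧ (Nat.card φ.ker).Coprime 5 := by
  have := h.isSolvable_ker
  have hpp : p.Prime := h3p.2.1
  have hp120 : p.Coprime (2 ^ 3 * 3 * 5) :=
    ((((Nat.coprime_primes hpp Nat.prime_two).2 hp2).pow_right 3).mul_right
      ((Nat.coprime_primes hpp Nat.prime_three).2 h3p.ne')).mul_right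
      ((Nat.coprime_primes hpp Nat.prime_five).2 h5p.ne')
  have hpK : p ∣ Nat.card φ.ker := by
    rw [← φ.ker.card_mul_index] at hp
    exact (hpp.dvd_mul.1 hp).resolve_right fun hpi ↦
      hpp.coprime_iff_not_dvd.1 hp120 (hpi.trans (index_ker_dvd φ))
  have h3 : 3 ∣ φ.ker.index := .trans (by norm_num) h.dvd_index_ker
  have h5 : 5 ∣ φ.ker.index := .trans (by norm_num) h.dvd_index_ker
  exact ⟨(h35.1.coprime_iff_not_dvd.2 <| not_dvd_card_of_dvd_index h35 h3p h5p _ h3 h5 hpK).symm,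
    (h35.2.1.coprime_iff_not_dvd.2 <|
      not_dvd_card_of_dvd_index h35.symm h5p h3p _ h5 h3 hpK).symm⟩

end A5Cover

/-! ### From elements of order three to elements of order five -/

section FixedPointFreeOfOrderThree

variable {G A : Type*} [Group G] [CommGroup A] [MulDistribMulAction G A] {a b c x : G}

theorem IsFixedPointFree.mul_smul_mul_inv_smul (ha : IsFixedPointFree A a) (ha3 : a ^ 3 = 1)
    (u : A) : u * a • u * a⁻¹ • u = 1 := by
  have hinv : a⁻¹ = a ^ 2 := by rw [inv_eq_iff_mul_eq_one, ← pow_succ', ha3]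
  rw [hinv]
  simpa [Finset.prod_range_succ] using ha.prod_range_pow_smul_eq_one ha3 u

/- Translate `u * a • u * a⁻¹ • u = 1` by `a * b`, and the same relation for `b` at
`(a * b)⁻¹ • u` by `a`; both end in the term `(a * b * a⁻¹) • u`. -/
theorem IsFixedPointFree.mul_smul_mul_smul (ha : IsFixedPointFree A a) (hb : IsFixedPointFree A b)
    (ha3 : a ^ 3 = 1) (hb3 : b ^ 3 = 1) (hc : c = a * b) (u : A) :
    c • u * c • a • u = a • c⁻¹ • u * u := by
  have h1 := congrArg (c • ·) (ha.mul_smul_mul_inv_smul ha3 u)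
  have h2 := congrArg (a • ·) (hb.mul_smul_mul_inv_smul hb3 (c⁻¹ • u))
  have hc1 : a * (b * c⁻¹) = 1 := by rw [hc]; group
  have hc2 : a * (b⁻¹ * c⁻¹) = c * a⁻¹ := by
    have hbb : b⁻¹ * b⁻¹ = b := by
      rw [← mul_inv_rev, inv_eq_iff_mul_eq_one, ← pow_two, ← pow_succ, hb3]
    rw [hc, mul_inv_rev, ← mul_assoc b⁻¹, hbb, mul_assoc]
  simp only [smul_mul', smul_one, smul_smul, hc1, hc2, one_smul] at h1 h2 ⊢
  exact mul_right_cancel (h1.trans h2.symm)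

theorem IsFixedPointFree.pow_smul_smul_div_mem (ha : IsFixedPointFree A a)
    (hb : IsFixedPointFree A b) (ha3 : a ^ 3 = 1) (hb3 : b ^ 3 = 1) (hc : c = a * b)
    {F : Subgroup A} (hF : ∀ i : ℤ, ∀ u ∈ F, c ^ i • u ∈ F) (n : ℕ) {u : A} (hu : u ∈ F) :
    c ^ n • a • u / a • (c ^ n)⁻¹ • u ∈ F := by
  induction n generalizing u with
  | zero => simp
  | succ n ih =>
    have hcu : c⁻¹ • u ∈ F := by simpa using hF (-1) u hu
    have hstep : c • a • u = a • c⁻¹ • u * (u / c • u) := by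
      rw [← mul_div_assoc, ← ha.mul_smul_mul_smul hb ha3 hb3 hc, mul_div_cancel_left]
    have hdiv : c ^ n • (u / c • u) ∈ F := by
      simpa using hF n _ (F.div_mem hu (by simpa using hF 1 u hu))
    have hn : c ^ (n + 1) • a • u / a • (c ^ (n + 1))⁻¹ • u =
        (c ^ n • a • c⁻¹ • u / a • (c ^ n)⁻¹ • c⁻¹ • u) * c ^ n • (u / c • u) := by
      rw [pow_succ, mul_smul, hstep, smul_mul', ← pow_succ, pow_succ', mul_inv_rev, mul_smul _ _ u,
        div_mul_eq_mul_div]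
    exact hn ▸ F.mul_mem (ih hcu) hdiv

theorem smul_eq_self_of_smul_div_eq_self {n : ℕ} (hx : x ^ n = 1)
    (hA : ∀ u : A, u ^ n = 1 → u = 1) {u : A} (hu : x • (x • u / u) = x • u / u) : x • u = u := by
  have hpow (m : ℕ) : x ^ m • u = u * (x • u / u) ^ m := by
    induction m with
    | zero => simp
    | succ m ih =>
      rw [pow_succ', mul_smul, ih, smul_mul', smul_pow', hu, pow_succ', ← mul_assoc,
        mul_div_cancel]
  have h1 := hpow n
  rw [hx, one_smul, left_eq_mul] at h1
  exact div_eq_one.1 (hA _ h1)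

theorem IsFixedPointFree.pow_smul_smul_eq (ha : IsFixedPointFree A a)
    (hb : IsFixedPointFree A b) (ha3 : a ^ 3 = 1) (hb3 : b ^ 3 = 1) {k n : ℕ}
    (hn : ((a * b) ^ k) ^ n = 1) (hA : ∀ u : A, u ^ n = 1 → u = 1) {u : A}
    (hu : (a * b) ^ k • u = u) : (a * b) ^ k • a • u = a • u := by
  set x := (a * b) ^ k with hx
  let F : Subgroup A := (MulDistribMulAction.toMonoidHom A x).eqLocus (MonoidHom.id A)
  have hF (i : ℤ) (w : A) (hw : x • w = w) : x • (a * b) ^ i • w = (a * b) ^ i • w := by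
    rw [smul_smul, ((Commute.refl (a * b)).pow_left k |>.zpow_right i).eq, mul_smul, hw]
  have hmem := ha.pow_smul_smul_div_mem hb ha3 hb3 rfl (F := F) hF k hu
  rw [← hx, inv_smul_eq_iff.2 hu.symm] at hmem
  exact smul_eq_self_of_smul_div_eq_self hn hA hmem

end FixedPointFreeOfOrderThree

section OrderFive

open scoped commutatorElement

variable {G A : Type*} [Group G] [CommGroup A] [MulDistribMulAction G A]
  {φ : G →* Equiv.Perm (Fin 5)}

theorem exists_orderOf_eq_and_map_eq (hφ : alternatingGroup (Fin 5) ≤ φ.range) {q : ℕ}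
    [Fact q.Prime] (hq : (Nat.card φ.ker).Coprime q) {σ : Equiv.Perm (Fin 5)}
    (hσ : σ ∈ alternatingGroup (Fin 5)) (hσq : orderOf σ = q) : ∃ g, orderOf g = q ∧ φ g = σ := by
  obtain ⟨g, rfl⟩ := hφ hσ
  obtain ⟨k, hk, hkφ⟩ := exists_pow_pow_eq_one_and_map_eq φ hq (hσq ▸ pow_orderOf_eq_one (φ g))
  refine ⟨g ^ k, orderOf_eq_prime hk fun h ↦ ?_, hkφ⟩
  rw [h, map_one] at hkφ
  rw [← hkφ, orderOf_one] at hσq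
  exact (Fact.out : q.Prime).one_lt.ne hσq

set_option maxRecDepth 100000 in
theorem exists_isFixedPointFree_of_orderOf_eq_five (hφ : alternatingGroup (Fin 5) ≤ φ.range)
    (h3 : (Nat.card φ.ker).Coprime 3) (h5 : (Nat.card φ.ker).Coprime 5)
    (hA3 : ∀ g : G, 3 ∣ orderOf g → IsFixedPointFree A g) (hA5 : ∀ u : A, u ^ 5 = 1 → u = 1) :
    ∃ y : G, orderOf y = 5 ∧ IsFixedPointFree A y := by
  have := Fact.mk Nat.prime_three
  have := Fact.mk Nat.prime_five
  let α : Equiv.Perm (Fin 5) := c[0, 1, 2]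
  let β : Equiv.Perm (Fin 5) := c[2, 3, 4]
  have hα : orderOf α = 3 := orderOf_eq_prime (by decide) (by decide)
  have hβ : orderOf β = 3 := orderOf_eq_prime (by decide) (by decide)
  have hαβ : (α * β) ^ 5 = 1 ∧ α * β ≠ 1 := by decide
  have hcomm : orderOf ⁅(α * β)⁻¹, α⁻¹⁆ = 3 := orderOf_eq_prime (by decide) (by decide)
  obtain ⟨a, ha, haα⟩ := exists_orderOf_eq_and_map_eq hφ h3
    (Equiv.Perm.mem_alternatingGroup.2 (by decide)) hα
  obtain ⟨b, hb, hbβ⟩ := exists_orderOf_eq_and_map_eq hφ h3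
    (Equiv.Perm.mem_alternatingGroup.2 (by decide)) hβ
  have hab : φ (a * b) = α * β := by rw [map_mul, haα, hbβ]
  obtain ⟨k, hk, hkφ⟩ := exists_pow_pow_eq_one_and_map_eq φ h5 (hab ▸ hαβ.1)
  refine ⟨(a * b) ^ k, orderOf_eq_prime hk fun h ↦ hαβ.2 ?_, fun u (hu : _ • u = u) ↦ ?_⟩
  · rw [← hab, ← hkφ, h, map_one]
  have hau := (hA3 a ha.symm.dvd).pow_smul_smul_eq (hA3 b hb.symm.dvd) (ha ▸ pow_orderOf_eq_one a)
    (hb ▸ pow_orderOf_eq_one b) hk hA5 hu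
  refine hA3 ⁅((a * b) ^ k)⁻¹, a⁻¹⁆ ?_ u ?_
  · have hdvd := orderOf_map_dvd φ ⁅((a * b) ^ k)⁻¹, a⁻¹⁆
    rwa [map_commutatorElement, map_inv, map_inv, hkφ, hab, haα, hcomm] at hdvd
  · simp only [commutatorElement_def, inv_inv, mul_smul, hau, inv_smul_smul]
    rw [inv_smul_eq_iff, hu]

theorem IsA5Cover.isFixedPointFree_of_orderOf_eq_five [Finite G] (h : IsA5Cover φ)
    (h3 : (Nat.card φ.ker).Coprime 3) (h5 : (Nat.card φ.ker).Coprime 5)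
    (hA3 : ∀ g : G, 3 ∣ orderOf g → IsFixedPointFree A g) (hA5 : ∀ u : A, u ^ 5 = 1 → u = 1)
    {x : G} (hx : orderOf x = 5) : IsFixedPointFree A x := by
  have := Fact.mk Nat.prime_five
  obtain ⟨y, hy, hyA⟩ :=
    exists_isFixedPointFree_of_orderOf_eq_five h.alternatingGroup_le_range h3 h5 hA3 hA5
  have h25 : ¬ 5 ^ 2 ∣ Nat.card G := fun hdvd ↦ by
    rw [← φ.ker.card_mul_index] at hdvd
    have h120 := ((h5.pow_right 2).symm.dvd_of_dvd_mul_left hdvd).trans (index_ker_dvd φ)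
    norm_num at h120
  obtain ⟨g, j, rfl⟩ := exists_eq_conj_zpow h25 hx hy
  refine .of_zpow (j := j) ?_
  simpa [mul_assoc] using hyA.conj g⁻¹

end OrderFive

section EdgeTransfer

open scoped IsMulCommutative

variable {G : Type*} [Group G] {φ : G →* Equiv.Perm (Fin 5)} {r : ℕ}

set_option maxRecDepth 100000 in
theorem pow_twelve_or_pow_five_eq_one (σ : Equiv.Perm (Fin 5)) : σ ^ 12 = 1 ∨ σ ^ 5 = 1 := by
  decide +revert

theorem primeGraphCompl_adj_five_of_injective (hφ : Function.Injective φ) (hr : r.Prime)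
    (hr5 : r ≠ 5) : (primeGraphCompl G).Adj 5 r := by
  refine ⟨Nat.prime_five, hr, hr5.symm, fun ⟨g, hg⟩ ↦ ?_⟩
  rw [← orderOf_injective φ hφ] at hg
  rcases pow_twelve_or_pow_five_eq_one (φ g) with h | h
  · have h12 := (Dvd.intro r hg.symm).trans (orderOf_dvd_of_pow_eq_one h)
    norm_num at h12
  · have h5 := hg ▸ orderOf_dvd_of_pow_eq_one h
    exact hr.not_dvd_one (Nat.dvd_of_mul_dvd_mul_left Nat.prime_five.pos h5)

attribute [local instance] conjMulDistribMulAction in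
theorem IsA5Cover.not_commute_of_adj_three [Finite G] (h : IsA5Cover φ)
    (h3 : (Nat.card φ.ker).Coprime 3) (h5 : (Nat.card φ.ker).Coprime 5)
    (h3r : (primeGraphCompl G).Adj 3 r) (hr5 : r ≠ 5) {V : Subgroup G} [V.Normal]
    [IsMulCommutative V] (hV : IsPGroup r V) {x v : G} (hx : orderOf x = 5) (hv : v ∈ V)
    (hv1 : v ≠ 1) : ¬ Commute x v := by
  have := Fact.mk h3r.2.1
  have hV5 := coprime_card_of_isPGroup hV Nat.prime_five hr5
  have hA5 (u : V) (hu : u ^ 5 = 1) : u = 1 := orderOf_eq_one_iff.1 <|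
    Nat.eq_one_of_dvd_coprimes hV5 (orderOf_dvd_natCard u) (orderOf_dvd_of_pow_eq_one hu)
  have hfix := h.isFixedPointFree_of_orderOf_eq_five h3 h5
    (fun g hg ↦ isFixedPointFree_of_adj hV h3r.symm hg) hA5 hx
  intro hcomm
  exact hv1 <| congrArg Subtype.val <| hfix ⟨v, hv⟩ <| conj_smul_eq_self_iff.2 hcomm

theorem orderOf_mk_of_notMem [Fact r.Prime] {V : Subgroup G} [V.Normal] {g : G} (hg : g ∉ V)
    (hr : orderOf g = r) : orderOf (g : G ⧸ V) = r :=
  orderOf_eq_prime (by rw [← QuotientGroup.mk_pow, ← hr, pow_orderOf_eq_one, QuotientGroup.mk_one])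
    (by rwa [Ne, QuotientGroup.eq_one_iff])

theorem IsA5Cover.adj_five_of_adj_three {G : Type*} [Group G] [Finite G]
    {φ : G →* Equiv.Perm (Fin 5)} (h : IsA5Cover φ) (h3 : (Nat.card φ.ker).Coprime 3)
    (h5 : (Nat.card φ.ker).Coprime 5) (h3r : (primeGraphCompl G).Adj 3 r) (hr5 : r ≠ 5) :
    (primeGraphCompl G).Adj 5 r := by
  have hr := h3r.2.1
  by_cases hbot : φ.ker = ⊥
  · exact primeGraphCompl_adj_five_of_injective (φ.ker_eq_bot_iff.1 hbot) hr hr5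
  refine ⟨Nat.prime_five, hr, hr5.symm, fun ⟨g, hg⟩ ↦ ?_⟩
  have := h.isSolvable_ker
  obtain ⟨l, hl, V, hVn, hV1, hVN, hV, hVc⟩ := exists_isPGroup_normal_le hbot
  have := Fact.mk hl
  have := Fact.mk hr
  have hx : orderOf (g ^ r) = 5 := by
    rw [orderOf_pow_of_dvd hr.ne_zero (hg ▸ dvd_mul_left _ _), hg, Nat.mul_div_cancel _ hr.pos]
  have hy : orderOf (g ^ 5) = r := by
    rw [orderOf_pow_of_dvd (by norm_num) (hg ▸ dvd_mul_right _ _), hg,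
      Nat.mul_div_cancel_left _ (by norm_num)]
  have hxy : Commute (g ^ r) (g ^ 5) := Commute.pow_pow_self g r 5
  have hyV : g ^ 5 ∉ V := by
    intro hyV
    have hy1 : g ^ 5 ≠ 1 := fun h1 ↦ hr.one_lt.ne (by rw [← hy, h1, orderOf_one])
    obtain rfl : l = r :=
      (Nat.prime_dvd_prime_iff_eq hl hr).1 (hy ▸ dvd_orderOf_of_mem_of_isPGroup hV hyV hy1)
    exact h.not_commute_of_adj_three h3 h5 h3r hr5 hV hx hyV hy1 hxy
  have hV5 : (Nat.card V).Coprime 5 := h5.coprime_dvd_left (Subgroup.card_dvd_of_le hVN)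
  have hcard := card_ker_lift_dvd hVN
  have : Nat.card (G ⧸ V) < Nat.card G := card_quotient_lt_card hV1
  refine not_commute_of_primeGraphCompl_adj
    ((h.quotient hVN).adj_five_of_adj_three (h3.coprime_dvd_left hcard) (h5.coprime_dvd_left hcard)
      (primeGraphCompl_le_quotient V h3r) hr5) (x := (g ^ r : G)) (y := (g ^ 5 : G)) ?_ ?_ ?_
  · rw [orderOf_mk_of_coprime_card (hx ▸ hV5), hx]
  · rw [orderOf_mk_of_notMem hyV hy]
  · exact hxy.map (QuotientGroup.mk' V)
termination_by Nat.card G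

end EdgeTransfer

/-! ### Extending homomorphisms onto `A₅` -/

section A5Generators

open Equiv

/-- With `threeCycle`, a pair of generators `c`, `b` of `A₅` satisfying the relations
`c ^ 5 = b ^ 3 = (c * b) ^ 2 = 1` of the `(2, 3, 5)` triangle group. -/
abbrev fiveCycle : Perm (Fin 5) := finRotate 5

/-- The generator of order three in the pair described at `fiveCycle`. -/
abbrev threeCycle : Perm (Fin 5) := c[0, 3, 2]

theorem fiveCycle_mem_alternatingGroup : fiveCycle ∈ alternatingGroup (Fin 5) :=
  Perm.mem_alternatingGroup.2 (by decide)

theorem threeCycle_mem_alternatingGroup : threeCycle ∈ alternatingGroup (Fin 5) :=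
  Perm.mem_alternatingGroup.2 (by decide)

theorem orderOf_fiveCycle : orderOf fiveCycle = 5 :=
  have := Fact.mk Nat.prime_five
  orderOf_eq_prime (by decide) (by decide)

theorem orderOf_threeCycle : orderOf threeCycle = 3 :=
  have := Fact.mk Nat.prime_three
  orderOf_eq_prime (by decide) (by decide)

theorem alternatingGroup_le_of_mem {H : Subgroup (Perm (Fin 5))} (hc : fiveCycle ∈ H)
    (hb : threeCycle ∈ H) : alternatingGroup (Fin 5) ≤ H := by
  have htrans : ∀ i j : Fin 5, ∃ k : Fin 5, (fiveCycle ^ (k : ℕ)) i = j := by decide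
  have : MulAction.IsPretransitive H (Fin 5) := ⟨fun i j ↦
    let ⟨k, hk⟩ := htrans i j
    ⟨⟨fiveCycle ^ (k : ℕ), H.pow_mem hc _⟩, hk⟩⟩
  have : MulAction.IsPreprimitive H (Fin 5) :=
    .of_prime_card (by rw [Nat.card_fin]; exact Nat.prime_five)
  have hb3 : threeCycle.IsThreeCycle := card_support_eq_three_iff.1 (by decide)
  exact Perm.alternatingGroup_le_of_isPreprimitive_of_isThreeCycle_mem this hb3 hb

set_option maxRecDepth 100000 in
theorem eq_one_of_commute_generators {s : Perm (Fin 5)} (hc : Commute s fiveCycle)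
    (hb : Commute s threeCycle) : s = 1 := by
  have h : ∀ s : Perm (Fin 5), s * fiveCycle = fiveCycle * s →
      s * threeCycle = threeCycle * s → s = 1 := by decide
  exact h s hc hb

theorem eq_of_conj_generators_eq {s t : Perm (Fin 5)}
    (hc : s * fiveCycle * s⁻¹ = t * fiveCycle * t⁻¹)
    (hb : s * threeCycle * s⁻¹ = t * threeCycle * t⁻¹) : s = t := by
  have hcomm {σ : Perm (Fin 5)} (h : s * σ * s⁻¹ = t * σ * t⁻¹) : Commute (t⁻¹ * s) σ := by
    rw [commute_iff_eq, mul_assoc, inv_mul_eq_iff_eq_mul, mul_inv_eq_iff_eq_mul.1 h]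
    group
  exact (inv_mul_eq_one.1 <| eq_one_of_commute_generators (hcomm hc) (hcomm hb)).symm

theorem exists_eq_conj_fiveCycle {σ : Perm (Fin 5)} (hσ : orderOf σ = 5) :
    ∃ s, σ = s * fiveCycle * s⁻¹ := by
  have hcycle : σ.IsCycle :=
    Perm.isCycle_of_prime_order' (by rw [hσ]; exact Nat.prime_five) (by rw [hσ]; decide)
  have hconj : IsConj fiveCycle σ := isCycle_finRotate.isConj hcycle <| by
    rw [← isCycle_finRotate.orderOf, ← hcycle.orderOf, orderOf_fiveCycle, hσ]
  obtain ⟨s, hs⟩ := isConj_iff.1 hconj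
  exact ⟨s, hs.symm⟩

set_option maxRecDepth 100000 in
theorem exists_eq_conj_generators {σ τ : Perm (Fin 5)} (hσ : orderOf σ = 5) (hτ : orderOf τ = 3)
    (hστ : (σ * τ) ^ 2 = 1) :
    ∃ s, σ = s * fiveCycle * s⁻¹ ∧ τ = s * threeCycle * s⁻¹ := by
  have hpow : ∀ τ : Perm (Fin 5), τ ^ 3 = 1 → (fiveCycle * τ) ^ 2 = 1 → τ ≠ 1 →
      ∃ i : Fin 5, τ = fiveCycle ^ (i : ℕ) * threeCycle * (fiveCycle ^ (i : ℕ))⁻¹ := by decide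
  obtain ⟨s, rfl⟩ := exists_eq_conj_fiveCycle hσ
  obtain ⟨τ, rfl⟩ := (MulAut.conj s).surjective τ
  rw [MulEquiv.orderOf_eq] at hτ
  rw [MulAut.conj_apply, conj_mul, conj_pow, conj_eq_one_iff] at hστ
  obtain ⟨i, rfl⟩ := hpow τ (hτ ▸ pow_orderOf_eq_one τ) hστ fun h ↦ by
    simp [h] at hτ
  exact ⟨s * fiveCycle ^ (i : ℕ), by group, by rw [MulAut.conj_apply]; group⟩

end A5Generators

section A5CoverExtension

open Equiv

theorem eq_bot_of_isSolvable_of_alternatingGroup_le_normalizer {D : Subgroup (Perm (Fin 5))}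
    [Group.IsSolvable D]
    (hD : alternatingGroup (Fin 5) ≤ Subgroup.normalizer (D : Set (Perm (Fin 5)))) : D = ⊥ := by
  have hsimple : IsSimpleGroup (alternatingGroup (Fin 5)) :=
    alternatingGroup.isSimpleGroup (by simp)
  have hnormal : (D.subgroupOf (alternatingGroup (Fin 5))).Normal :=
    Subgroup.normal_subgroupOf_of_le_normalizer hD
  have hinf : D.subgroupOf (alternatingGroup (Fin 5)) = ⊥ := by
    refine hnormal.eq_bot_or_eq_top.resolve_right fun htop ↦ ?_
    have : Group.IsSolvable (alternatingGroup (Fin 5)) :=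
      Group.isSolvable_of_isSolvable_injective
        (Subgroup.inclusion_injective (Subgroup.subgroupOf_eq_top.1 htop))
    have hcomm := IsSimpleGroup.comm_iff_isSolvable.2 this ⟨_, fiveCycle_mem_alternatingGroup⟩
      ⟨_, threeCycle_mem_alternatingGroup⟩
    exact absurd (congrArg Subtype.val hcomm) (by decide)
  rw [Subgroup.eq_bot_iff_forall]
  intro d hd
  have hcomm {a : Perm (Fin 5)} (ha : a ∈ alternatingGroup (Fin 5)) : Commute d a := by
    have hA : d * a * d⁻¹ * a⁻¹ ∈ alternatingGroup (Fin 5) :=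
      mul_mem ((inferInstance : (alternatingGroup (Fin 5)).Normal).conj_mem a ha d) (inv_mem ha)
    have hmem : d * (a * d⁻¹ * a⁻¹) ∈ D :=
      D.mul_mem hd ((Subgroup.mem_normalizer_iff.1 (hD ha) d⁻¹).1 (D.inv_mem hd))
    have hone : (⟨_, hA⟩ : alternatingGroup (Fin 5)) ∈ D.subgroupOf (alternatingGroup (Fin 5)) := by
      rw [Subgroup.mem_subgroupOf]
      simpa only [mul_assoc] using hmem
    rw [hinf, Subgroup.mem_bot, Subgroup.mk_eq_one, mul_inv_eq_one, mul_inv_eq_iff_eq_mul] at hone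
    exact hone
  exact eq_one_of_commute_generators (hcomm fiveCycle_mem_alternatingGroup)
    (hcomm threeCycle_mem_alternatingGroup)

variable {N : Type*} [Group N] {φ θ : N →* Perm (Fin 5)}

theorem IsA5Cover.le_ker (h : IsA5Cover φ) (D : Subgroup N) [D.Normal] [Group.IsSolvable D] :
    D ≤ φ.ker := by
  have : Group.IsSolvable (D.map φ) := Group.isSolvable_of_surjective (φ.subgroupMap_surjective D)
  rw [← Subgroup.map_eq_bot_iff]
  refine eq_bot_of_isSolvable_of_alternatingGroup_le_normalizer
    (h.alternatingGroup_le_range.trans ?_)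
  rw [MonoidHom.range_eq_map, ← Subgroup.normalizer_eq_top D]
  exact Subgroup.le_normalizer_map φ

theorem eq_of_apply_eq_generators (hle : φ.ker ≤ θ.ker) {x y : N} (hx : φ x = fiveCycle)
    (hy : φ y = threeCycle) (hx' : θ x = fiveCycle) (hy' : θ y = threeCycle) : θ = φ := by
  have hgen : alternatingGroup (Fin 5) ≤ (φ.eqLocus θ).map φ :=
    alternatingGroup_le_of_mem ⟨x, hx.trans hx'.symm, hx⟩ ⟨y, hy.trans hy'.symm, hy⟩
  have heq {m : N} (hm : φ m ∈ alternatingGroup (Fin 5)) : θ m = φ m := by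
    obtain ⟨l, hl, hlm⟩ := hgen hm
    have hθ : θ (l⁻¹ * m) = 1 := hle <| by
      rw [MonoidHom.mem_ker, map_mul, map_inv, hlm, inv_mul_cancel]
    rw [map_mul, map_inv, inv_mul_eq_one] at hθ
    rw [← hθ, ← hlm]
    exact hl.symm
  ext1 n
  have hcomm {m : N} (hm : φ m ∈ alternatingGroup (Fin 5)) : Commute ((φ n)⁻¹ * θ n) (φ m) := by
    have hconj : θ (n * m * n⁻¹) = φ (n * m * n⁻¹) := heq <| by
      rw [map_mul, map_mul, map_inv]
      exact (inferInstance : (alternatingGroup (Fin 5)).Normal).conj_mem _ hm _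
    rw [map_mul, map_mul, map_inv, heq hm, map_mul, map_mul, map_inv] at hconj
    rw [commute_iff_eq, mul_assoc, inv_mul_eq_iff_eq_mul, ← mul_assoc, ← mul_assoc, ← hconj]
    group
  refine (inv_mul_eq_one.1 <| eq_one_of_commute_generators ?_ ?_).symm
  · exact hx ▸ hcomm (hx ▸ fiveCycle_mem_alternatingGroup)
  · exact hy ▸ hcomm (hy ▸ threeCycle_mem_alternatingGroup)

theorem IsA5Cover.ker_le_ker_comp (h : IsA5Cover φ) (α : MulAut N) :
    φ.ker ≤ (φ.comp α.toMonoidHom).ker := by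
  have := h.isSolvable_ker
  have : Group.IsSolvable (φ.ker.map α.toMonoidHom) :=
    Group.isSolvable_of_surjective (α.toMonoidHom.subgroupMap_surjective φ.ker)
  have : (φ.ker.map α.toMonoidHom).Normal := .map inferInstance _ α.surjective
  rw [← MonoidHom.comap_ker, ← Subgroup.map_le_iff_le_comap]
  exact h.le_ker _

theorem IsA5Cover.orderOf_apply_mulAut (h : IsA5Cover φ) (α : MulAut N) (n : N) :
    orderOf (φ (α n)) = orderOf (φ n) := by
  refine orderOf_eq_orderOf_iff.2 fun k ↦ ?_
  rw [← map_pow, ← map_pow, ← map_pow]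
  refine ⟨fun hk ↦ ?_, fun hk ↦ h.ker_le_ker_comp α hk⟩
  have hk' : φ (α⁻¹ (α (n ^ k))) = 1 := h.ker_le_ker_comp α⁻¹ hk
  rwa [MulAut.inv_apply_self] at hk'

theorem IsA5Cover.exists_comp_eq_conj (h : IsA5Cover φ) (α : MulAut N) :
    ∃! s, ∀ n, φ (α n) = s * φ n * s⁻¹ := by
  obtain ⟨x, hx⟩ := h.alternatingGroup_le_range fiveCycle_mem_alternatingGroup
  obtain ⟨y, hy⟩ := h.alternatingGroup_le_range threeCycle_mem_alternatingGroup
  obtain ⟨s, hsx, hsy⟩ : ∃ s, φ (α x) = s * fiveCycle * s⁻¹ ∧ φ (α y) = s * threeCycle * s⁻¹ := by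
    refine exists_eq_conj_generators ?_ ?_ ?_
    · rw [h.orderOf_apply_mulAut, hx, orderOf_fiveCycle]
    · rw [h.orderOf_apply_mulAut, hy, orderOf_threeCycle]
    · rw [← map_mul, ← map_mul, ← orderOf_dvd_iff_pow_eq_one, h.orderOf_apply_mulAut,
        orderOf_dvd_iff_pow_eq_one, map_mul, hx, hy]
      decide
  have hθ : (MulAut.conj s⁻¹).toMonoidHom.comp (φ.comp α.toMonoidHom) = φ := by
    refine eq_of_apply_eq_generators ?_ hx hy ?_ ?_
    · refine (h.ker_le_ker_comp α).trans fun n hn ↦ ?_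
      rw [MonoidHom.mem_ker] at hn ⊢
      rw [MonoidHom.comp_apply, hn, map_one]
    · change s⁻¹ * φ (α x) * s⁻¹⁻¹ = fiveCycle
      rw [hsx]; group
    · change s⁻¹ * φ (α y) * s⁻¹⁻¹ = threeCycle
      rw [hsy]; group
  refine ⟨s, fun n ↦ ?_, fun t ht ↦ ?_⟩
  · have hn : s⁻¹ * φ (α n) * s⁻¹⁻¹ = φ n := DFunLike.congr_fun hθ n
    rw [← hn]; group
  · exact eq_of_conj_generators_eq (by rw [← hsx, ht, hx]) (by rw [← hsy, ht, hy])

theorem IsA5Cover.exists_extension {K : Type*} [Group K] {N : Subgroup K} [N.Normal]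
    {φ : N →* Perm (Fin 5)} (h : IsA5Cover φ) : ∃ ψ : K →* Perm (Fin 5), ψ.comp N.subtype = φ := by
  choose s hs huniq using fun k : K ↦ h.exists_comp_eq_conj (MulAut.conjNormal k)
  refine ⟨MonoidHom.mk' s fun k l ↦ ?_, ?_⟩
  · refine (huniq (k * l) _ fun n ↦ ?_).symm
    rw [map_mul, MulAut.mul_apply, hs, hs]
    group
  · ext1 n
    refine (huniq n _ fun m ↦ ?_).symm
    rw [← map_inv, ← map_mul, ← map_mul]
    rfl

end A5CoverExtension

/-! ### The structure of pseudo-solvable groups -/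

section Structure

open Equiv

variable {K : Type*} [Group K] {N : Subgroup K} [N.Normal]

theorem exists_fifteen_dvd_orderOf {π ψ : K →* Perm (Fin 5)}
    (hπ : alternatingGroup (Fin 5) ≤ π.range)
    (hψ : alternatingGroup (Fin 5) ≤ π.ker.map ψ) : ∃ g : K, 3 * 5 ∣ orderOf g := by
  obtain ⟨h, hh⟩ := hπ fiveCycle_mem_alternatingGroup
  -- The square makes `ψ (h ^ 2)` even, hence the value of `ψ` at some element of `π.ker`.
  have heven : (ψ (h ^ 2))⁻¹ * threeCycle ∈ alternatingGroup (Fin 5) :=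
    mul_mem (inv_mem <| Perm.mem_alternatingGroup.2 <| by rw [map_pow, map_pow, Int.units_sq])
      threeCycle_mem_alternatingGroup
  obtain ⟨n, hn, hψn⟩ := hψ heven
  have hψg : ψ (h ^ 2 * n) = threeCycle := by rw [map_mul, hψn, mul_inv_cancel_left]
  have hπg : orderOf (π (h ^ 2 * n)) = 5 := by
    rw [map_mul, MonoidHom.mem_ker.1 hn, mul_one, map_pow, hh, Nat.Coprime.orderOf_pow,
      orderOf_fiveCycle]
    rw [orderOf_fiveCycle]
    decide
  refine ⟨h ^ 2 * n, Nat.Coprime.mul_dvd_of_dvd_of_dvd (by decide) ?_ ?_⟩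
  · rw [← orderOf_threeCycle, ← hψg]
    exact orderOf_map_dvd ψ _
  · rw [← hπg]
    exact orderOf_map_dvd π _

theorem IsA5Cover.of_comp_subtype {ψ : K →* Perm (Fin 5)} [Group.IsSolvable (K ⧸ N)]
    (h : IsA5Cover (ψ.comp N.subtype)) : IsA5Cover ψ where
  alternatingGroup_le_range := h.alternatingGroup_le_range.trans <| by
    rw [MonoidHom.range_comp]
    exact Subgroup.map_le_range _ _
  isSolvable_ker := by
    have := h.isSolvable_ker
    rw [← MonoidHom.comap_ker] at this
    refine Group.isSolvable_of_ker_le_range (N.subtype.subgroupComap ψ.ker)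
      ((QuotientGroup.mk' N).comp ψ.ker.subtype) fun k hk ↦ ?_
    have hkN : (k : K) ∈ N := (QuotientGroup.eq_one_iff _).1 hk
    exact ⟨⟨⟨k, hkN⟩, k.2⟩, rfl⟩

/-- The action of `K` on five letters given by an isomorphism of a quotient of `K` with `A₅`. -/
def permOfQuotient (e : K ⧸ N ≃* alternatingGroup (Fin 5)) : K →* Perm (Fin 5) :=
  (alternatingGroup (Fin 5)).subtype.comp (e.toMonoidHom.comp (QuotientGroup.mk' N))

theorem alternatingGroup_le_range_permOfQuotient (e : K ⧸ N ≃* alternatingGroup (Fin 5)) :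
    alternatingGroup (Fin 5) ≤ (permOfQuotient e).range := by
  intro σ hσ
  obtain ⟨k, hk⟩ := QuotientGroup.mk_surjective (e.symm ⟨σ, hσ⟩)
  exact ⟨k, congrArg Subtype.val (e.symm_apply_eq.1 hk.symm).symm⟩

theorem ker_permOfQuotient (e : K ⧸ N ≃* alternatingGroup (Fin 5)) :
    (permOfQuotient e).ker = N := by
  ext k
  rw [MonoidHom.mem_ker, ← QuotientGroup.eq_one_iff, ← map_eq_one_iff e e.injective]
  exact OneMemClass.coe_eq_one

/-- `G` is solvable or an extension of `A₅` or `S₅` by a solvable group. Pseudo-solvable groups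
without elements of order `15` have this form. -/
def IsSolvableOrA5Cover (G : Type*) [Group G] : Prop :=
  Group.IsSolvable G ∨ ∃ φ : G →* Perm (Fin 5), IsA5Cover φ

theorem IsSolvableOrA5Cover.congr {L : Type*} [Group L] (e : K ≃* L)
    (h : IsSolvableOrA5Cover K) : IsSolvableOrA5Cover L := by
  obtain hK | ⟨φ, hφ⟩ := h
  · exact .inl (Group.isSolvable_of_isSolvable_injective (f := e.symm.toMonoidHom) e.symm.injective)
  · have := hφ.isSolvable_ker
    refine .inr ⟨φ.comp e.symm.toMonoidHom, ?_, ?_⟩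
    · intro σ hσ
      obtain ⟨k, rfl⟩ := hφ.alternatingGroup_le_range hσ
      exact ⟨e k, by simp⟩
    · refine Group.isSolvable_of_isSolvable_injective
        (f := e.symm.toMonoidHom.subgroupComap φ.ker) fun x y hxy ↦ ?_
      exact Subtype.ext (e.symm.injective (congrArg Subtype.val hxy))

theorem IsSolvableOrA5Cover.of_normal [Finite K] (h35 : (primeGraphCompl K).Adj 3 5)
    (hN : IsSolvableOrA5Cover N)
    (hK : IsCyclic (K ⧸ N) ∨ Nonempty (K ⧸ N ≃* alternatingGroup (Fin 5))) :
    IsSolvableOrA5Cover K := by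
  obtain hcyclic | ⟨⟨e⟩⟩ := hK
  · have : Group.IsSolvable (K ⧸ N) := Group.isSolvable_of_comm IsCyclic.commGroup.mul_comm
    obtain hN | ⟨φ, hφ⟩ := hN
    · exact .inl ((Group.isSolvable_iff_subgroup_quotient N).2 ⟨hN, this⟩)
    · obtain ⟨ψ, rfl⟩ := hφ.exists_extension
      exact .inr ⟨ψ, hφ.of_comp_subtype⟩
  · have hrange := alternatingGroup_le_range_permOfQuotient e
    obtain _ | ⟨φ, hφ⟩ := hN
    · exact .inr ⟨permOfQuotient e, hrange, by rwa [ker_permOfQuotient]⟩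
    · obtain ⟨ψ, rfl⟩ := hφ.exists_extension
      have hmap : alternatingGroup (Fin 5) ≤ (permOfQuotient e).ker.map ψ := by
        rw [ker_permOfQuotient, ← N.range_subtype, ← MonoidHom.range_comp]
        exact hφ.alternatingGroup_le_range
      obtain ⟨g, hg⟩ := exists_fifteen_dvd_orderOf hrange hmap
      exact absurd hg (not_dvd_orderOf_of_primeGraphCompl_adj h35 g)

theorem IsPseudoSolvable.isSolvableOrA5Cover {G : Type*} [Group G] [Finite G]
    (hG : IsPseudoSolvable G) (h35 : (primeGraphCompl G).Adj 3 5) : IsSolvableOrA5Cover G := by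
  obtain ⟨n, H, hbot, htop, hstep⟩ := hG
  have hterm (i : Fin (n + 1)) : IsSolvableOrA5Cover (H i) := by
    induction i using Fin.induction with
    | zero => exact .inl (by rw [hbot]; infer_instance)
    | succ i ih =>
      obtain ⟨hle, hnormal, hfactor⟩ := hstep i
      exact .of_normal (primeGraphCompl_le_subgroup _ h35)
        (ih.congr (Subgroup.subgroupOfEquivOfLe hle).symm) hfactor
  have hlast := hterm (Fin.last n)
  rw [htop] at hlast
  exact hlast.congr Subgroup.topEquiv

end Structure

/-- In a pseudo-solvable group whose prime-graph complement has a triangle `{p,3,5}`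
with `p ∉ {2,3,5}`, the edge `3 - r` of the complement implies the edge `5 - r`:
if `G` has no element of order `3r` then it has no element of order `5r`. -/
theorem edge3r_implies_edge5r
    (G : Type*) [Group G] [Finite G] (hG : IsPseudoSolvable G)
    (p : ℕ) (hp : p.Prime) (hp' : p ∉ ({2, 3, 5} : Set ℕ))
    (hpd : p ∣ Nat.card G) (h3d : 3 ∣ Nat.card G) (h5d : 5 ∣ Nat.card G)
    (h3p : ¬ ∃ g : G, orderOf g = 3 * p)
    (h5p : ¬ ∃ g : G, orderOf g = 5 * p)
    (h15 : ¬ ∃ g : G, orderOf g = 15)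
    (r : ℕ) (hr : r.Prime) (hrd : r ∣ Nat.card G) (hr' : r ∉ ({3, 5} : Set ℕ))
    (h3r : ¬ ∃ g : G, orderOf g = 3 * r) :
    ¬ ∃ g : G, orderOf g = 5 * r := by
  obtain ⟨hp2, hp3, hp5⟩ : p ≠ 2 ∧ p ≠ 3 ∧ p ≠ 5 := by
    simpa only [Set.mem_insert_iff, Set.mem_singleton_iff, not_or] using hp'
  obtain ⟨hr3, hr5⟩ : r ≠ 3 ∧ r ≠ 5 := by
    simpa only [Set.mem_insert_iff, Set.mem_singleton_iff, not_or] using hr'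
  have adj3p : (primeGraphCompl G).Adj 3 p := ⟨Nat.prime_three, hp, hp3.symm, h3p⟩
  have adj5p : (primeGraphCompl G).Adj 5 p := ⟨Nat.prime_five, hp, hp5.symm, h5p⟩
  have adj35 : (primeGraphCompl G).Adj 3 5 := ⟨Nat.prime_three, Nat.prime_five, by decide, h15⟩
  have adj3r : (primeGraphCompl G).Adj 3 r := ⟨Nat.prime_three, hr, hr3.symm, h3r⟩
  obtain _ | ⟨φ, hφ⟩ := hG.isSolvableOrA5Cover adj35
  · exact absurd hpd (not_triangle_of_isSolvable adj35 adj3p adj5p h3d h5d)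
  · obtain ⟨hker3, hker5⟩ := hφ.coprime_card_ker adj35 adj3p adj5p hp2 hpd
    exact (hφ.adj_five_of_adj_three hker3 hker5 adj3r hr5).2.2.2
end

section
/- Let G be a finite group and N a normal subgroup of G that is a 2-group, such that G/N is isomorphic to the alternating group A₅. If a Sylow 2-subgroup of G is a generalized quaternion group (i.e., isomorphic to the dicyclic group QuaternionGroup 2ᵏ of order 2^{k+2} for some k ≥ 1), then |N| = 2 and G is isomorphic to SL(2,5). -/
/-
Since `A₅` has no element of order 4, squares of elements of `P` lie in `N`, and counting gives
`N = ⟨a²⟩` where `a` generates the cyclic maximal subgroup of `P`. Conjugation on a cyclic group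
factors through an abelian group and `A₅` is perfect, so `N` is central; as `a²` commutes with the
remaining generator of `P`, `P` is `Q₈` and `|N| = 2`. Involutions of `P` are squares in `P`, so
all involutions of `G` lie in `N`: `G` is a binary cover of `A₅`.

Two binary covers `G₁`, `G₂` of a perfect group `Q` without elements of order 4, with kernels `⟨z₁⟩`
and `⟨z₂⟩`, are isomorphic. In a Sylow 2-subgroup `S` of the fiber product `F` all squares lie in
`⟨(z₁, z₂)⟩`, hence so does `S'`. By transfer `S'` contains every central 2-element of `F'`, so
neither `(z₁, 1)` nor `(1, z₂)` is in `F'`, and `F'` is the graph of an isomorphism `G₁ ≃ G₂`.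
Finally `SL(2, 5)` is a binary cover of `A₅` through its action on the five cosets of the binary
tetrahedral group.
-/

open Subgroup
open scoped commutatorElement MatrixGroups

section GeneralGroupTheory

variable {G Q : Type*} [Group G] [Group Q]

theorem sq_eq_one_of_pow_two_pow_eq_one {M : Type*} [Monoid M]
    (h4 : ∀ x : M, x ^ 4 = 1 → x ^ 2 = 1) {x : M} {n : ℕ} (hx : x ^ 2 ^ n = 1) : x ^ 2 = 1 := by
  induction n generalizing x with
  | zero => rw [pow_zero, pow_one] at hx; rw [hx, one_pow]
  | succ n ih =>
    have hsq : (x ^ 2) ^ 2 = 1 := ih (by rwa [← pow_mul, ← pow_succ'])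
    exact h4 x (by rwa [← pow_mul] at hsq)

theorem commutator_le_of_sq_mem {H K : Subgroup G} (h : ∀ x ∈ H, x ^ 2 ∈ K) : ⁅H, H⁆ ≤ K := by
  refine commutator_le.2 fun x hx y hy ↦ ?_
  have hsq : ⁅x, y⁆ = x ^ 2 * (x⁻¹ * y) ^ 2 * (y ^ 2)⁻¹ := by
    simp [commutatorElement_def, pow_two, mul_assoc]
  rw [hsq]
  exact K.mul_mem (K.mul_mem (h x hx) (h _ (H.mul_mem (H.inv_mem hx) hy))) (K.inv_mem (h y hy))

theorem center_inf_commutator_inf_sylow_le {p : ℕ} [Fact p.Prime] (P : Sylow p G)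
    [P.FiniteIndex] : center G ⊓ commutator G ⊓ P ≤ ⁅(P : Subgroup G), (P : Subgroup G)⁆ := by
  rintro c ⟨⟨hcen, hcom⟩, hcP⟩
  let τ : G →* Abelianization P := MonoidHom.transfer Abelianization.of
  have hτ : τ c = Abelianization.of (⟨c, hcP⟩ ^ P.index) :=
    MonoidHom.transfer_eq_pow _ c fun k g _ ↦ by
      rw [mul_assoc, ← mem_center_iff.1 (pow_mem hcen k) g, inv_mul_cancel_left]
  have hpow : (⟨c, hcP⟩ : P) ^ P.index ∈ commutator P := by
    rw [← Abelianization.ker_of, MonoidHom.mem_ker, ← hτ]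
    exact Abelianization.commutator_subset_ker τ hcom
  have hcoprime : P.index.Coprime (orderOf (⟨c, hcP⟩ : P)) :=
    (P.isPGroup'.orderOf_coprime
      ((Nat.Prime.coprime_iff_not_dvd Fact.out).2 P.not_dvd_index) _).symm
  obtain ⟨m, hm⟩ := exists_pow_eq_self_of_coprime hcoprime
  rw [← map_subtype_commutator]
  exact ⟨⟨c, hcP⟩, hm ▸ pow_mem hpow m, rfl⟩

theorem isPGroup_zpowers_of_pow_eq_one {p : ℕ} {x : G} {n : ℕ} (hx : x ^ p ^ n = 1) :
    IsPGroup p (zpowers x) := by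
  rintro ⟨_, m, rfl⟩
  exact ⟨n, Subtype.ext <| by
    rw [coe_pow, coe_one, ← zpow_natCast, zpow_comm, zpow_natCast, hx, one_zpow]⟩

theorem map_sq_eq_one_of_mem_sylow (h4 : ∀ q : Q, q ^ 4 = 1 → q ^ 2 = 1) (π : G →* Q)
    {P : Sylow 2 G} {x : G} (hx : x ∈ P) : π x ^ 2 = 1 := by
  obtain ⟨n, hn⟩ := P.isPGroup' ⟨x, hx⟩
  refine sq_eq_one_of_pow_two_pow_eq_one h4 (n := n) ?_
  rw [← map_pow, show x ^ 2 ^ n = 1 from congr_arg Subtype.val hn, map_one]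

theorem exists_conj_mem_sylow {p : ℕ} [Fact p.Prime] [Finite (Sylow p G)] (P : Sylow p G)
    {x : G} {n : ℕ} (hx : x ^ p ^ n = 1) : ∃ g : G, g * x * g⁻¹ ∈ P := by
  obtain ⟨R, hR⟩ := (isPGroup_zpowers_of_pow_eq_one hx).exists_le_sylow
  obtain ⟨g, rfl⟩ := MulAction.exists_smul_eq G R P
  exact ⟨g, smul_mem_pointwise_smul x (MulAut.conj g) R (hR (mem_zpowers x))⟩

theorem card_ker_mul_pow_dvd_card_sylow {p j : ℕ} [Fact p.Prime] [Finite G] {π : G →* Q}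
    (hπ : Function.Surjective π) (hker : IsPGroup p π.ker) (hj : p ^ j ∣ Nat.card Q)
    (P : Sylow p G) : Nat.card π.ker * p ^ j ∣ Nat.card P := by
  obtain ⟨m, hm⟩ := IsPGroup.iff_card.1 hker
  have hdvd : p ^ (m + j) ∣ Nat.card G := by
    rw [← π.ker.card_mul_index, index_ker, MonoidHom.range_eq_top.2 hπ, card_top, hm, pow_add]
    exact mul_dvd_mul_left _ hj
  simpa only [hm, pow_add] using P.pow_dvd_card_of_pow_dvd_card hdvd

theorem map_commutator_eq_top [Group.IsPerfect Q] {π : G →* Q}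
    (hπ : Function.Surjective π) : (commutator G).map π = ⊤ := by
  rw [commutator_def, map_commutator, ← MonoidHom.range_eq_map,
    MonoidHom.range_eq_top.2 hπ, ← commutator_def, Group.IsPerfect.commutator_eq_top]

theorem commutator_sup_ker_eq_top [Group.IsPerfect Q] {π : G →* Q}
    (hπ : Function.Surjective π) : commutator G ⊔ π.ker = ⊤ := by
  rw [← comap_map_eq, map_commutator_eq_top hπ, comap_top]

theorem ker_le_center_of_isCyclic [Group.IsPerfect Q] {π : G →* Q}
    (hπ : Function.Surjective π) [IsCyclic π.ker] : π.ker ≤ center G := by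
  let conj : G →* (ZMod (Nat.card π.ker))ˣ :=
    (IsCyclic.mulAutMulEquiv π.ker).toMonoidHom.comp MulAut.conjNormal
  have mem_conj_ker {g : G} : g ∈ conj.ker ↔ ∀ n ∈ π.ker, g * n = n * g := by
    simp only [conj, MonoidHom.mem_ker, MonoidHom.comp_apply, MulEquiv.toMonoidHom_eq_coe,
      MonoidHom.coe_coe, EmbeddingLike.map_eq_one_iff, MulEquiv.ext_iff, MulAut.one_apply,
      Subtype.ext_iff, MulAut.conjNormal_apply, mul_inv_eq_iff_eq_mul, Subtype.forall]
  have hker : π.ker ≤ conj.ker := fun m hm ↦ mem_conj_ker.2 fun n hn ↦ setLike_mul_comm hm hn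
  have htop : conj.ker = ⊤ := top_unique <| (commutator_sup_ker_eq_top hπ).ge.trans <|
    sup_le (Abelianization.commutator_subset_ker conj) hker
  exact fun n hn ↦ mem_center_iff.2 fun g ↦ mem_conj_ker.1 (htop ▸ mem_top g) n hn

theorem nonempty_mulEquiv_of_subgroup_prod {H : Subgroup (G × Q)}
    (hfst : H.map (MonoidHom.fst G Q) = ⊤) (hsnd : H.map (MonoidHom.snd G Q) = ⊤)
    (hH : ∀ h ∈ H, h.1 = 1 ↔ h.2 = 1) : Nonempty (G ≃* Q) := by
  have fst_bij : Function.Bijective ((MonoidHom.fst G Q).comp H.subtype) := by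
    refine ⟨(injective_iff_map_eq_one _).2 fun c hc ↦ ?_, ?_⟩
    · exact Subtype.ext (Prod.ext hc ((hH c c.2).1 hc))
    · rw [← MonoidHom.range_eq_top, MonoidHom.range_comp, range_subtype, hfst]
  have snd_bij : Function.Bijective ((MonoidHom.snd G Q).comp H.subtype) := by
    refine ⟨(injective_iff_map_eq_one _).2 fun c hc ↦ ?_, ?_⟩
    · exact Subtype.ext (Prod.ext ((hH c c.2).2 hc) hc)
    · rw [← MonoidHom.range_eq_top, MonoidHom.range_comp, range_subtype, hsnd]
  exact ⟨(exists_mulEquiv_eq_graph fst_bij snd_bij).choose⟩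

end GeneralGroupTheory

section Quaternion

open QuaternionGroup

theorem orderOf_quaternionGroup_a_two {n : ℕ} : orderOf (a 2 : QuaternionGroup n) = n := by
  rw [show (a 2 : QuaternionGroup n) = a 1 ^ 2 from (a_one_pow 2).symm, orderOf_pow' _ two_ne_zero,
    orderOf_a_one, Nat.gcd_mul_right_left, Nat.mul_div_cancel_left _ two_pos]

theorem dvd_two_of_commute_quaternionGroup {n : ℕ}
    (h : Commute (a 2 : QuaternionGroup n) (xa 0)) : n ∣ 2 := by
  have h22 : (-2 : ZMod (2 * n)) = 2 := by
    simpa only [a_mul_xa, xa_mul_a, zero_sub, zero_add, xa.injEq] using h.eq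
  have h4 : ((2 * 2 : ℕ) : ZMod (2 * n)) = 0 := by
    push_cast; linear_combination -h22
  exact Nat.dvd_of_mul_dvd_mul_left two_pos ((ZMod.natCast_eq_zero_iff _ _).1 h4)

theorem quaternionGroup_isSquare_of_sq_eq_one {n : ℕ} [NeZero n] {q : QuaternionGroup n}
    (hq : q ^ 2 = 1) : IsSquare q := by
  cases q with
  | a i =>
    have hi : 2 * n ∣ 2 * i.val := by
      rw [← ZMod.natCast_eq_zero_iff, Nat.cast_mul, ZMod.natCast_zmod_val]
      simpa [pow_two, one_def, two_mul, -a_zero] using hq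
    obtain ⟨c, hc⟩ := Nat.dvd_of_mul_dvd_mul_left two_pos hi
    have hc2 : c < 2 := by
      have := i.val_lt
      rw [hc, mul_comm] at this
      exact Nat.lt_of_mul_lt_mul_right this
    rw [← ZMod.natCast_zmod_val i, hc]
    interval_cases c
    · exact ⟨1, by simp⟩
    · exact ⟨xa 0, by simp⟩
  | xa i =>
    have := orderOf_dvd_of_pow_eq_one hq
    rw [orderOf_xa] at this
    norm_num at this

end Quaternion

section BinaryCover

/-- A binary cover of `Q`: a double cover in which no involution of `Q` lifts to an involution,
as in the binary polyhedral groups. -/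
structure IsBinaryCover {G Q : Type*} [Group G] [Group Q] (π : G →* Q) : Prop where
  surjective : Function.Surjective π
  card_ker : Nat.card π.ker = 2
  map_eq_one_of_sq_eq_one : ∀ x, x ^ 2 = 1 → π x = 1

namespace IsBinaryCover

variable {G G₁ G₂ E Q : Type*} [Group G] [Group G₁] [Group G₂] [Group E] [Group Q]
  {π : G →* Q} {π₁ : G₁ →* Q} {π₂ : G₂ →* Q}

theorem sq_eq_one_iff (h : IsBinaryCover π) {x : G} : x ^ 2 = 1 ↔ π x = 1 :=
  ⟨h.map_eq_one_of_sq_eq_one x, fun hx ↦ by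
    simpa only [h.card_ker, Subtype.ext_iff] using! pow_card_eq_one' (x := (⟨x, hx⟩ : π.ker))⟩

theorem exists_map_eq_one_iff (h : IsBinaryCover π) :
    ∃ z : G, orderOf z = 2 ∧ ∀ x, π x = 1 ↔ x = 1 ∨ x = z := by
  obtain ⟨⟨z, hz⟩, hz1, huniq⟩ := (Nat.card_eq_two_iff' (1 : π.ker)).1 h.card_ker
  have hz1' : z ≠ 1 := fun hz' ↦ hz1 (Subtype.ext hz')
  refine ⟨z, orderOf_eq_prime (h.sq_eq_one_iff.2 hz) hz1', fun x ↦ ⟨fun hx ↦ ?_, ?_⟩⟩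
  · exact or_iff_not_imp_left.2 fun hx1 ↦
      congr_arg Subtype.val (huniq ⟨x, hx⟩ fun hx' ↦ hx1 (congr_arg Subtype.val hx'))
  · rintro (rfl | rfl)
    exacts [map_one π, hz]

theorem ker_le_center [Group.IsPerfect Q] (h : IsBinaryCover π) : π.ker ≤ center G :=
  have := isCyclic_of_prime_card h.card_ker
  ker_le_center_of_isCyclic h.surjective

theorem isPerfect [Finite Q] [Group.IsPerfect Q] (h : IsBinaryCover π) (hQ : 2 ∣ Nat.card Q) :
    Group.IsPerfect G := by
  obtain ⟨q, hq⟩ := exists_prime_orderOf_dvd_card' 2 hQ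
  obtain ⟨x, hx, rfl⟩ : q ∈ (commutator G).map π := map_commutator_eq_top h.surjective ▸ mem_top q
  obtain ⟨z, -, hz⟩ := h.exists_map_eq_one_iff
  have hsq : x ^ 2 = z := by
    have hker : π (x ^ 2) = 1 := by rw [map_pow, ← hq, pow_orderOf_eq_one]
    refine ((hz _).1 hker).resolve_left fun h1 ↦ ?_
    simp [h.sq_eq_one_iff.1 h1] at hq
  have hle : π.ker ≤ commutator G := fun y hy ↦ by
    obtain rfl | rfl := (hz y).1 hy
    exacts [one_mem _, hsq ▸ pow_mem hx 2]
  rw [Group.isPerfect_def, ← commutator_sup_ker_eq_top h.surjective, sup_eq_left.2 hle]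

theorem exists_subgroup_sq_mem (h₁ : IsBinaryCover π₁) (h₂ : IsBinaryCover π₂) :
    ∃ D : Subgroup (G₁ × G₂), (∀ d ∈ D, d.1 = 1 ↔ d.2 = 1) ∧
      ∀ x, π₁ x.1 = π₂ x.2 → π₁ x.1 ^ 2 = 1 → x ^ 2 ∈ D := by
  obtain ⟨z₁, hz₁, hker₁⟩ := h₁.exists_map_eq_one_iff
  obtain ⟨z₂, hz₂, hker₂⟩ := h₂.exists_map_eq_one_iff
  refine ⟨zpowers (z₁, z₂), ?_, fun x hx hx2 ↦ ?_⟩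
  · rintro _ ⟨n, rfl⟩
    rw [Prod.pow_fst, Prod.pow_snd, ← orderOf_dvd_iff_zpow_eq_one, ← orderOf_dvd_iff_zpow_eq_one,
      hz₁, hz₂]
  · have hx₁ : x.1 ^ 2 = 1 ∨ x.1 ^ 2 = z₁ := (hker₁ _).1 (by rw [map_pow, hx2])
    have hx₂ : x.2 ^ 2 = 1 ∨ x.2 ^ 2 = z₂ := (hker₂ _).1 (by rw [map_pow, ← hx, hx2])
    have hiff : x.1 ^ 2 = 1 ↔ x.2 ^ 2 = 1 := by rw [h₁.sq_eq_one_iff, h₂.sq_eq_one_iff, hx]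
    obtain h | h : x ^ 2 = 1 ∨ x ^ 2 = (z₁, z₂) := by
      simp only [Prod.ext_iff, Prod.pow_fst, Prod.pow_snd, Prod.fst_one, Prod.snd_one]; tauto
    exacts [h ▸ one_mem _, h ▸ mem_zpowers _]

theorem fst_eq_one_iff_of_mem_commutator [Finite E]
    (h₁ : IsBinaryCover π₁) (h₂ : IsBinaryCover π₂) (h4 : ∀ q : Q, q ^ 4 = 1 → q ^ 2 = 1)
    {f : E →* G₁ × G₂} (hf : ∀ x, π₁ (f x).1 = π₂ (f x).2)
    {c : E} (hc : c ∈ center E ⊓ commutator E) (hc2 : c ^ 2 = 1) :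
    (f c).1 = 1 ↔ (f c).2 = 1 := by
  obtain ⟨D, hD, hsqD⟩ := h₁.exists_subgroup_sq_mem h₂
  have hcp : IsPGroup 2 (zpowers c) := isPGroup_zpowers_of_pow_eq_one (n := 1) (by rwa [pow_one])
  obtain ⟨P, hcP⟩ := hcp.exists_le_sylow
  have hP : ⁅(P : Subgroup E), (P : Subgroup E)⁆ ≤ D.comap f := by
    refine commutator_le_of_sq_mem fun x hx ↦ ?_
    rw [mem_comap, map_pow]
    exact hsqD _ (hf x)
      (map_sq_eq_one_of_mem_sylow h4 ((π₁.comp (MonoidHom.fst G₁ G₂)).comp f) hx)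
  exact hD _ (hP (center_inf_commutator_inf_sylow_le P ⟨hc, hcP (mem_zpowers c)⟩))

end IsBinaryCover

/-- The fiber product `G₁ ×_Q G₂` of two groups over `Q`, as a subgroup of `G₁ × G₂`. -/
def fiberProduct {G₁ G₂ Q : Type*} [Group G₁] [Group G₂] [Group Q] (π₁ : G₁ →* Q) (π₂ : G₂ →* Q) :
    Subgroup (G₁ × G₂) :=
  (π₁.comp (MonoidHom.fst G₁ G₂)).eqLocus (π₂.comp (MonoidHom.snd G₁ G₂))

variable {G₁ G₂ Q : Type*} [Group G₁] [Group G₂] [Group Q] {π₁ : G₁ →* Q} {π₂ : G₂ →* Q}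

theorem map_fst_fiberProduct (hπ₂ : Function.Surjective π₂) :
    (fiberProduct π₁ π₂).map (MonoidHom.fst G₁ G₂) = ⊤ :=
  top_unique fun x _ ↦
    have ⟨y, hy⟩ := hπ₂ (π₁ x)
    ⟨(x, y), hy.symm, rfl⟩

theorem map_snd_fiberProduct (hπ₁ : Function.Surjective π₁) :
    (fiberProduct π₁ π₂).map (MonoidHom.snd G₁ G₂) = ⊤ :=
  top_unique fun y _ ↦
    have ⟨x, hx⟩ := hπ₁ (π₂ y)
    ⟨(x, y), hx, rfl⟩

theorem IsBinaryCover.fst_eq_one_iff_of_mem_commutator_fiberProduct [Finite G₁] [Finite G₂]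
    [Group.IsPerfect Q] (h₁ : IsBinaryCover π₁) (h₂ : IsBinaryCover π₂)
    (h4 : ∀ q : Q, q ^ 4 = 1 → q ^ 2 = 1) {c : G₁ × G₂}
    (hc : c ∈ ⁅fiberProduct π₁ π₂, fiberProduct π₁ π₂⁆) (hc₁ : π₁ c.1 = 1) :
    c.1 = 1 ↔ c.2 = 1 := by
  rw [← map_subtype_commutator] at hc
  obtain ⟨c, hc, rfl⟩ := hc
  have hc₂ : π₂ (c : G₁ × G₂).2 = 1 := c.2.symm.trans hc₁
  refine h₁.fst_eq_one_iff_of_mem_commutator h₂ h4 (f := (fiberProduct π₁ π₂).subtype)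
    (fun x ↦ x.2) ⟨mem_center_iff.2 fun g ↦ ?_, hc⟩ ?_
  · exact Subtype.ext (Prod.ext (mem_center_iff.1 (h₁.ker_le_center hc₁) _)
      (mem_center_iff.1 (h₂.ker_le_center hc₂) _))
  · exact Subtype.ext (Prod.ext (h₁.sq_eq_one_iff.2 hc₁) (h₂.sq_eq_one_iff.2 hc₂))

theorem IsBinaryCover.nonempty_mulEquiv [Finite G₁] [Finite G₂] [Group.IsPerfect Q]
    (h₁ : IsBinaryCover π₁) (h₂ : IsBinaryCover π₂) (hQ : 2 ∣ Nat.card Q)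
    (h4 : ∀ q : Q, q ^ 4 = 1 → q ^ 2 = 1) : Nonempty (G₁ ≃* G₂) := by
  have : Finite Q := Finite.of_surjective π₁ h₁.surjective
  have := h₁.isPerfect hQ
  have := h₂.isPerfect hQ
  let F := fiberProduct π₁ π₂
  refine nonempty_mulEquiv_of_subgroup_prod (H := ⁅F, F⁆) ?_ ?_ fun c hc ↦ ?_
  · rw [map_commutator, map_fst_fiberProduct h₂.surjective, ← commutator_def,
      Group.IsPerfect.commutator_eq_top]
  · rw [map_commutator, map_snd_fiberProduct h₁.surjective, ← commutator_def,
      Group.IsPerfect.commutator_eq_top]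
  · have hcF : π₁ c.1 = π₂ c.2 := F.commutator_le_self hc
    have key := h₁.fst_eq_one_iff_of_mem_commutator_fiberProduct h₂ h4 hc
    exact ⟨fun hc₁ ↦ (key (by rw [hc₁, map_one])).1 hc₁,
      fun hc₂ ↦ (key (by rw [hcF, hc₂, map_one])).2 hc₂⟩

end BinaryCover

section QuaternionSylow

open QuaternionGroup

variable {G Q : Type*} [Group G] [Group Q] [Finite G] {π : G →* Q} {P : Sylow 2 G} {k : ℕ}

theorem ker_eq_zpowers_of_sylow_mulEquiv_quaternionGroup
    (hπ : Function.Surjective π) (hker : IsPGroup 2 π.ker)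
    (hQ4 : 4 ∣ Nat.card Q) (h4 : ∀ q : Q, q ^ 4 = 1 → q ^ 2 = 1)
    (e : P ≃* QuaternionGroup (2 ^ k)) : π.ker = zpowers (e.symm (a 2) : G) := by
  have hle : zpowers (e.symm (a 2) : G) ≤ π.ker := by
    have hsq : (a 2 : QuaternionGroup (2 ^ k)) = a 1 ^ 2 := (a_one_pow 2).symm
    rw [zpowers_le, MonoidHom.mem_ker, hsq, map_pow, coe_pow, map_pow]
    exact map_sq_eq_one_of_mem_sylow h4 π (SetLike.coe_mem _)
  have hcard : Nat.card P = 2 ^ k * 2 ^ 2 := by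
    rw [Nat.card_congr e.toEquiv, Nat.card_eq_fintype_card, QuaternionGroup.card]
    ring
  have hdvd : Nat.card π.ker ∣ 2 ^ k :=
    Nat.dvd_of_mul_dvd_mul_right (by norm_num)
      (hcard ▸ card_ker_mul_pow_dvd_card_sylow hπ hker hQ4 P)
  refine (eq_of_le_of_card_ge hle ?_).symm
  rw [Nat.card_zpowers, orderOf_coe, e.symm.orderOf_eq, orderOf_quaternionGroup_a_two]
  exact Nat.le_of_dvd (by positivity) hdvd

theorem map_eq_one_of_sq_eq_one_of_sylow_mulEquiv_quaternionGroup {n : ℕ} [NeZero n]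
    (h4 : ∀ q : Q, q ^ 4 = 1 → q ^ 2 = 1) (π : G →* Q) (e : P ≃* QuaternionGroup n) {x : G}
    (hx : x ^ 2 = 1) : π x = 1 := by
  obtain ⟨g, hg⟩ := exists_conj_mem_sylow P (n := 1) (by rwa [pow_one])
  have hg2 : (⟨g * x * g⁻¹, hg⟩ : P) ^ 2 = 1 :=
    Subtype.ext (by rw [coe_pow, coe_one, conj_pow, hx, mul_one, mul_inv_cancel])
  obtain ⟨q, hq⟩ : IsSquare (e ⟨_, hg⟩) :=
    quaternionGroup_isSquare_of_sq_eq_one (by rw [← map_pow, hg2, map_one])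
  have hsq : g * x * g⁻¹ = (e.symm q : G) ^ 2 := by
    rw [pow_two, ← coe_mul, ← map_mul, ← hq, e.symm_apply_apply]
  have hconj : π (g * x * g⁻¹) = 1 := by
    rw [hsq, map_pow, map_sq_eq_one_of_mem_sylow h4 π (SetLike.coe_mem _)]
  simpa only [map_mul, map_inv, conj_eq_one_iff] using hconj

theorem isBinaryCover_of_sylow_mulEquiv_quaternionGroup [Group.IsPerfect Q]
    (hπ : Function.Surjective π) (hker : IsPGroup 2 π.ker)
    (hQ4 : 4 ∣ Nat.card Q) (h4 : ∀ q : Q, q ^ 4 = 1 → q ^ 2 = 1) (hk : 1 ≤ k)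
    (e : P ≃* QuaternionGroup (2 ^ k)) : IsBinaryCover π := by
  have hker_eq := ker_eq_zpowers_of_sylow_mulEquiv_quaternionGroup hπ hker hQ4 h4 e
  have hcard : Nat.card π.ker = 2 ^ k := by
    rw [hker_eq, Nat.card_zpowers, orderOf_coe, e.symm.orderOf_eq, orderOf_quaternionGroup_a_two]
  have hcyc : IsCyclic π.ker := hker_eq ▸ inferInstance
  have hcenter : (e.symm (a 2) : G) ∈ center G :=
    ker_le_center_of_isCyclic hπ (hker_eq ▸ mem_zpowers _)
  have hcomm : Commute (a 2 : QuaternionGroup (2 ^ k)) (xa 0) :=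
    e.symm.injective <| Subtype.ext <| by
      simpa only [map_mul, coe_mul] using (mem_center_iff.1 hcenter _).symm
  have hcard2 : Nat.card π.ker = 2 := hcard.trans <|
    (Nat.le_of_dvd two_pos (dvd_two_of_commute_quaternionGroup hcomm)).antisymm
      (Nat.pow_le_pow_right two_pos hk)
  exact ⟨hπ, hcard2, fun _ hx ↦
    map_eq_one_of_sq_eq_one_of_sylow_mulEquiv_quaternionGroup h4 π e hx⟩

end QuaternionSylow

section BinaryIcosahedral

/-- The binary tetrahedral subgroup of `SL(2, 5)`: the normalizer of the quaternion group of
monomial matrices. Its equations say that conjugation by `g` carries `diag(2, -2)` to a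
monomial matrix. -/
def binaryTetrahedral : Subgroup SL(2, ZMod 5) where
  carrier := {g | (g 0 0 * g 0 1 = 0 ∧ g 1 0 * g 1 1 = 0) ∨ g 0 0 * g 1 1 + g 0 1 * g 1 0 = 0}
  one_mem' := by decide
  mul_mem' {g h} := by
    simp only [Set.mem_ofPred_eq]
    decide +kernel +revert
  inv_mem' {g} := by
    simp only [Set.mem_ofPred_eq]
    decide +kernel +revert

instance : DecidablePred (· ∈ binaryTetrahedral) := fun g ↦
  inferInstanceAs <| Decidable <|
    (g 0 0 * g 0 1 = 0 ∧ g 1 0 * g 1 1 = 0) ∨ g 0 0 * g 1 1 + g 0 1 * g 1 0 = 0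

theorem card_SL_two_five : Nat.card SL(2, ZMod 5) = 120 := by
  rw [Nat.card_eq_fintype_card]
  decide +kernel

theorem card_binaryTetrahedral : Nat.card binaryTetrahedral = 24 := by
  rw [Nat.card_eq_fintype_card]
  decide +kernel

theorem index_binaryTetrahedral : binaryTetrahedral.index = 5 := by
  have := binaryTetrahedral.card_mul_index
  rw [card_binaryTetrahedral, card_SL_two_five] at this
  lia

theorem mem_normalCore_binaryTetrahedral {g : SL(2, ZMod 5)} :
    g ∈ binaryTetrahedral.normalCore ↔ g ^ 2 = 1 := by
  change (∀ h, h * g * h⁻¹ ∈ binaryTetrahedral) ↔ g ^ 2 = 1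
  decide +kernel +revert

theorem card_normalCore_binaryTetrahedral : Nat.card binaryTetrahedral.normalCore = 2 := by
  rw [Nat.card_congr (Equiv.subtypeEquivRight fun _ ↦ mem_normalCore_binaryTetrahedral),
    Nat.card_eq_fintype_card]
  decide +kernel

/-- The action of `SL(2, 5)` on the five cosets of `binaryTetrahedral`, in an arbitrary numbering of
the cosets. -/
noncomputable def cosetPerm : SL(2, ZMod 5) →* Equiv.Perm (Fin 5) :=
  (Finite.equivFinOfCardEq index_binaryTetrahedral).permCongrHom.toMonoidHom.comp
    (MulAction.toPermHom SL(2, ZMod 5) (SL(2, ZMod 5) ⧸ binaryTetrahedral))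

theorem ker_cosetPerm : cosetPerm.ker = binaryTetrahedral.normalCore := by
  rw [normalCore_eq_ker]
  exact MonoidHom.ker_comp_of_injective _ _ (MulEquiv.injective _)

theorem range_cosetPerm : cosetPerm.range = alternatingGroup (Fin 5) := by
  refine Equiv.Perm.eq_alternatingGroup_of_index_eq_two ?_
  have hker : Nat.card cosetPerm.ker = 2 := by
    rw [ker_cosetPerm, card_normalCore_binaryTetrahedral]
  have hSL := cosetPerm.ker.card_mul_index
  rw [hker, index_ker, card_SL_two_five] at hSL
  have hS₅ : Nat.card cosetPerm.range * cosetPerm.range.index = 120 := by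
    rw [card_mul_index, Nat.card_perm, Nat.card_fin]
    rfl
  rw [show Nat.card cosetPerm.range = 60 by lia] at hS₅
  lia

/-- The binary icosahedral double cover `SL(2, 5) → A₅`, given by the action of `SL(2, 5)` on the
five cosets of `binaryTetrahedral`. -/
noncomputable def binaryIcosahedralHom : SL(2, ZMod 5) →* alternatingGroup (Fin 5) :=
  cosetPerm.codRestrict _ fun g ↦ range_cosetPerm.le ⟨g, rfl⟩

theorem isBinaryCover_binaryIcosahedralHom : IsBinaryCover binaryIcosahedralHom where
  surjective x := by
    obtain ⟨g, hg⟩ : (x : Equiv.Perm (Fin 5)) ∈ cosetPerm.range := range_cosetPerm.ge x.2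
    exact ⟨g, Subtype.ext hg⟩
  card_ker := by
    rw [binaryIcosahedralHom, MonoidHom.ker_codRestrict, ker_cosetPerm,
      card_normalCore_binaryTetrahedral]
  map_eq_one_of_sq_eq_one g hg := by
    rwa [← MonoidHom.mem_ker, binaryIcosahedralHom, MonoidHom.ker_codRestrict, ker_cosetPerm,
      mem_normalCore_binaryTetrahedral]

end BinaryIcosahedral

theorem alternatingGroup_five_sq_eq_one_of_pow_four_eq_one :
    ∀ σ : alternatingGroup (Fin 5), σ ^ 4 = 1 → σ ^ 2 = 1 := by
  decide +kernel

/-- If `N` is a normal 2-subgroup of a finite group `G` with `G/N ≅ A₅` and a Sylow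
2-subgroup of `G` is generalized quaternion, then `|N| = 2` and `G ≅ SL(2,5)`. -/
theorem generalized_quaternion_sylow_SL25
    (G : Type*) [Group G] [Finite G]
    (N : Subgroup G) (hNn : N.Normal) (hN2 : IsPGroup 2 N)
    (hquot : haveI := hNn
      Nonempty ((G ⧸ N) ≃* alternatingGroup (Fin 5)))
    (P : Sylow 2 G) (k : ℕ) (hk : 1 ≤ k)
    (hP : Nonempty ((P : Subgroup G) ≃* QuaternionGroup (2 ^ k))) :
    Nat.card N = 2 ∧
      Nonempty (G ≃* Matrix.SpecialLinearGroup (Fin 2) (ZMod 5)) := by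
  obtain ⟨f⟩ := hquot
  obtain ⟨e⟩ := hP
  let π : G →* alternatingGroup (Fin 5) := f.toMonoidHom.comp (QuotientGroup.mk' N)
  have hker : π.ker = N := (MonoidHom.ker_mulEquiv_comp _ f).trans (QuotientGroup.ker_mk' N)
  have hπ : Function.Surjective π := f.surjective.comp (QuotientGroup.mk'_surjective N)
  have hA₅ : Group.IsPerfect (alternatingGroup (Fin 5)) :=
    ⟨commutator_alternatingGroup_eq_top (by simp)⟩
  have h4 := alternatingGroup_five_sq_eq_one_of_pow_four_eq_one
  have hcard : 4 ∣ Nat.card (alternatingGroup (Fin 5)) := by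
    rw [nat_card_alternatingGroup, Nat.card_fin]; decide
  have hcover : IsBinaryCover π :=
    isBinaryCover_of_sylow_mulEquiv_quaternionGroup hπ (hker ▸ hN2) hcard h4 hk e
  exact ⟨hker ▸ hcover.card_ker, hcover.nonempty_mulEquiv isBinaryCover_binaryIcosahedralHom
    (dvd_trans (by decide) hcard) h4⟩
end
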